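/- arXiv:2301.03417 — 8 statements merged into one kernel-verified Lean document; each statement's English description precedes it below -/
import Mathlib

section
/- Every digraph D is k-mixing for every integer k ≥ δ*_min(D) + 2, where δ*_min(D) denotes the min-degeneracy of D. -/
/-- A relation (digraph) is acyclic if no vertex lies on a directed cycle. -/
def RelAcyclic {V : Type} (r : V → V → Prop) : Prop :=
  ∀ v, ¬ Relation.TransGen r v v

/-- `α` is a `k`-dicolouring of the digraph `D`: each colour class induces
an acyclic subdigraph. -/
def IsDicolouring {V : Type} (D : V → V → Prop) (k : ℕ) (α : V → Fin k) : Prop :=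
  ∀ c : Fin k, RelAcyclic (fun u v => D u v ∧ α u = c ∧ α v = c)

/-- Two colourings differ on exactly one vertex. -/
def RecolAdj {V : Type} {k : ℕ} (α β : V → Fin k) : Prop :=
  ∃ v, α v ≠ β v ∧ ∀ w, w ≠ v → α w = β w

/-- A single edge of the `k`-dicolouring graph `D_k(D)`. -/
def RecolStep {V : Type} (D : V → V → Prop) (k : ℕ) (α β : V → Fin k) : Prop :=
  IsDicolouring D k α ∧ IsDicolouring D k β ∧ RecolAdj α β

/-- The digraph `D` is `k`-mixing: the `k`-dicolouring graph is connected. -/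
def Mixing {V : Type} (D : V → V → Prop) (k : ℕ) : Prop :=
  ∀ α β : V → Fin k, IsDicolouring D k α → IsDicolouring D k β →
    Relation.ReflTransGen (RecolStep D k) α β

/-- Out-degree of `v` in the subdigraph of `D` induced by `S`. -/
noncomputable def outDegOn {V : Type} (D : V → V → Prop) (S : Set V) (v : V) : ℕ :=
  {w ∈ S | D v w}.ncard

/-- In-degree of `v` in the subdigraph of `D` induced by `S`. -/
noncomputable def inDegOn {V : Type} (D : V → V → Prop) (S : Set V) (v : V) : ℕ :=
  {w ∈ S | D w v}.ncard

/-- An oriented graph: a digraph with no digon (hence also no loop). -/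
def Oriented {V : Type} (D : V → V → Prop) : Prop :=
  ∀ u v, D u v → ¬ D v u

/-- A walk of length `m` in the `k`-dicolouring graph (a redicolouring sequence):
consecutive dicolourings differ on exactly one vertex. -/
def RecolWalk {V : Type} (D : V → V → Prop) (k m : ℕ) (γ : ℕ → V → Fin k) : Prop :=
  (∀ i ≤ m, IsDicolouring D k (γ i)) ∧ ∀ i < m, RecolAdj (γ i) (γ (i + 1))

/-- A frozen `k`-dicolouring: no single vertex can be recoloured so as to
yield another `k`-dicolouring. -/
def FrozenDicolouring {V : Type} [DecidableEq V] (D : V → V → Prop) (k : ℕ)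
    (α : V → Fin k) : Prop :=
  IsDicolouring D k α ∧
    ∀ (v : V) (c : Fin k), c ≠ α v → ¬ IsDicolouring D k (Function.update α v c)

/-- The arc set of a digraph, as a set of ordered pairs. -/
def arcSet {V : Type} (D : V → V → Prop) : Set (V × V) := {p | D p.1 p.2}

/-- The arcs of `D` lying inside a set `S` of vertices. -/
def arcSetOn {V : Type} (D : V → V → Prop) (S : Set V) : Set (V × V) :=
  {p | p.1 ∈ S ∧ p.2 ∈ S ∧ D p.1 p.2}

/-- Restriction of a digraph to a vertex set. -/
def restr {V : Type} (D : V → V → Prop) (S : Set V) (u v : V) : Prop :=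
  D u v ∧ u ∈ S ∧ v ∈ S

theorem acyclic_of_source_sink {V : Type} (r r' : V → V → Prop) (v : V)
    (hv : (∀ w, ¬ r v w) ∨ (∀ w, ¬ r w v))
    (hr : ∀ x y, x ≠ v → y ≠ v → r x y → r' x y) (h : RelAcyclic r') : RelAcyclic r := by
  intro x hx
  rcases hv with hv | hv
  · have key : ∀ y, Relation.TransGen r x y → y ≠ v → Relation.TransGen r' x y := by
      intro y hy
      induction hy with
      | single h1 =>
        intro hyv
        exact .single (hr _ _ (by rintro rfl; exact hv _ h1) hyv h1)
      | @tail b c h1 h2 ih =>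
        intro hyv
        have hb : b ≠ v := by
          intro e
          exact hv _ (e ▸ h2)
        exact .tail (ih hb) (hr _ _ hb hyv h2)
    refine h x (key x hx ?_)
    rintro rfl
    obtain ⟨y, hy, _⟩ := Relation.TransGen.head'_iff.1 hx
    exact hv _ hy
  · have hxv : x ≠ v := by
      rintro rfl
      obtain ⟨y, _, hy⟩ := Relation.TransGen.tail'_iff.1 hx
      exact hv _ hy
    have key : ∀ y, Relation.TransGen r x y → y ≠ v ∧ Relation.TransGen r' x y := by
      intro y hy
      induction hy with
      | @single b h1 =>
        have hb : b ≠ v := by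
          intro e
          exact hv _ (e ▸ h1)
        exact ⟨hb, .single (hr _ _ hxv hb h1)⟩
      | @tail b c h1 h2 ih =>
        have hb : c ≠ v := by
          intro e
          exact hv _ (e ▸ h2)
        exact ⟨hb, .tail ih.2 (hr _ _ ih.1 hb h2)⟩
    exact h x (key x hx).2

theorem dic_mono {V : Type} {D : V → V → Prop} {k : ℕ} {S T : Set V} (hST : S ⊆ T)
    {α : V → Fin k} (h : IsDicolouring (restr D T) k α) : IsDicolouring (restr D S) k α := by
  intro c x hx
  refine h c x (Relation.TransGen.mono ?_ _ _ hx)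
  rintro a b ⟨⟨h1, h2, h3⟩, h4⟩
  exact ⟨⟨h1, hST h2, hST h3⟩, h4⟩

theorem dic_congr {V : Type} {D : V → V → Prop} {k : ℕ} {S : Set V}
    {α β : V → Fin k} (hab : ∀ w ∈ S, α w = β w)
    (h : IsDicolouring (restr D S) k α) : IsDicolouring (restr D S) k β := by
  intro c x hx
  refine h c x (Relation.TransGen.mono ?_ _ _ hx)
  rintro a b ⟨⟨h1, h2, h3⟩, h4, h5⟩
  exact ⟨⟨h1, h2, h3⟩, (hab a h2).trans h4, (hab b h3).trans h5⟩

theorem dic_extend {V : Type} {D : V → V → Prop} {k : ℕ} {S : Set V} {v : V} {N : Set V}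
    (hN : (∀ w ∈ S, D v w → w ∈ N) ∨ (∀ w ∈ S, D w v → w ∈ N))
    {α : V → Fin k} (hα : ∀ w ∈ N, α w ≠ α v)
    (h : IsDicolouring (restr D (S \ {v})) k α) : IsDicolouring (restr D S) k α := by
  intro c
  refine acyclic_of_source_sink _ _ v ?_ ?_ (h c)
  · rcases hN with hN | hN
    · left
      rintro w ⟨⟨h1, h2, h3⟩, h4, h5⟩
      exact hα w (hN w h3 h1) (h5.trans h4.symm)
    · right
      rintro w ⟨⟨h1, h2, h3⟩, h4, h5⟩
      exact hα w (hN w h2 h1) (h4.trans h5.symm)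
  · rintro x y hx hy ⟨⟨h1, h2, h3⟩, h4⟩
    exact ⟨⟨h1, ⟨h2, hx⟩, ⟨h3, hy⟩⟩, h4⟩

theorem step_of_agree {V : Type} {D : V → V → Prop} {k : ℕ} {α β : V → Fin k} (v : V)
    (hα : IsDicolouring D k α) (hβ : IsDicolouring D k β) (hab : ∀ w, w ≠ v → α w = β w) :
    Relation.ReflTransGen (RecolStep D k) α β := by
  by_cases h : α v = β v
  · have : α = β := by
      funext w
      by_cases hw : w = v
      · rw [hw, h]
      · exact hab w hw
    rw [this]
  · exact .single ⟨hα, hβ, v, h, hab⟩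

theorem lift_step {V : Type} [Finite V] {D : V → V → Prop} {d k : ℕ} (hk : d + 2 ≤ k)
    {S : Set V} {v : V} {N : Set V} (hvN : v ∉ N) (hNd : N.ncard ≤ d)
    (hN : (∀ w ∈ S, D v w → w ∈ N) ∨ (∀ w ∈ S, D w v → w ∈ N))
    {γ γ' α : V → Fin k} (hs : RecolStep (restr D (S \ {v})) k γ γ')
    (hα : IsDicolouring (restr D S) k α) (hag : ∀ w, w ≠ v → α w = γ w) :
    ∃ β, Relation.ReflTransGen (RecolStep (restr D S) k) α β ∧
      IsDicolouring (restr D S) k β ∧ ∀ w, w ≠ v → β w = γ' w := by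
  classical
  obtain ⟨h1, h2, u, hne, hu⟩ := hs
  by_cases huv : u = v
  · subst huv
    exact ⟨α, .refl, hα, fun w hw => (hag w hw).trans (hu w hw)⟩
  obtain ⟨a, ha⟩ : ∃ a, a ∉ insert (γ' u) (α '' N) := by
    by_contra hcon
    push Not at hcon
    have e : insert (γ' u) (α '' N) = Set.univ := Set.eq_univ_of_forall hcon
    have c1 : (insert (γ' u) (α '' N)).ncard ≤ (α '' N).ncard + 1 := Set.ncard_insert_le _ _
    have c2 : (α '' N).ncard ≤ N.ncard := Set.ncard_image_le (Set.toFinite _)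
    rw [e, Set.ncard_univ, Nat.card_eq_fintype_card, Fintype.card_fin] at c1
    omega
  simp only [Set.mem_insert_iff, Set.mem_image, not_or, not_exists, not_and] at ha
  obtain ⟨ha1, ha2⟩ := ha
  have hwv : ∀ w ∈ N, w ≠ v := fun w hw e => hvN (e ▸ hw)
  have d1 : IsDicolouring (restr D S) k (Function.update α v a) := by
    refine dic_extend hN ?_ (dic_congr ?_ h1)
    · intro w hw
      rw [Function.update_self, Function.update_of_ne (hwv w hw)]
      exact ha2 w hw
    · intro w hw
      rw [Function.update_of_ne hw.2, hag w hw.2]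
  have d2 : IsDicolouring (restr D S) k (Function.update γ' v a) := by
    refine dic_extend hN ?_ (dic_congr ?_ h2)
    · intro w hw
      rw [Function.update_self, Function.update_of_ne (hwv w hw)]
      by_cases hwu : w = u
      · rw [hwu]
        exact fun e => ha1 e.symm
      · rw [← hu w hwu, ← hag w (hwv w hw)]
        exact ha2 w hw
    · intro w hw
      rw [Function.update_of_ne hw.2]
  refine ⟨Function.update γ' v a, .trans (step_of_agree v hα d1 ?_) (step_of_agree u d1 d2 ?_),
    d2, fun w hw => Function.update_of_ne hw _ _⟩
  · intro w hw
    rw [Function.update_of_ne hw]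
  · intro w hw
    by_cases hw' : w = v
    · rw [hw', Function.update_self, Function.update_self]
    · rw [Function.update_of_ne hw', Function.update_of_ne hw', hag w hw', hu w hw]

theorem lift_path {V : Type} [Finite V] {D : V → V → Prop} {d k : ℕ} (hk : d + 2 ≤ k)
    {S : Set V} {v : V} {N : Set V} (hvN : v ∉ N) (hNd : N.ncard ≤ d)
    (hN : (∀ w ∈ S, D v w → w ∈ N) ∨ (∀ w ∈ S, D w v → w ∈ N))
    {α γ : V → Fin k} (hs : Relation.ReflTransGen (RecolStep (restr D (S \ {v})) k) α γ)
    (hα : IsDicolouring (restr D S) k α) :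
    ∃ β, Relation.ReflTransGen (RecolStep (restr D S) k) α β ∧
      IsDicolouring (restr D S) k β ∧ ∀ w, w ≠ v → β w = γ w := by
  induction hs with
  | refl => exact ⟨α, .refl, hα, fun _ _ => rfl⟩
  | tail _ h2 ih =>
    obtain ⟨β, p, hβ, hag⟩ := ih
    obtain ⟨β', p', hβ', hag'⟩ := lift_step hk hvN hNd hN h2 hβ hag
    exact ⟨β', p.trans p', hβ', hag'⟩

theorem path_of_empty {V : Type} [Finite V] {D : V → V → Prop} {k : ℕ}
    (hD : ∀ u v, ¬ D u v) : Mixing D k := by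
  classical
  have hdic : ∀ γ : V → Fin k, IsDicolouring D k γ := by
    intro γ c x hx
    obtain ⟨y, hy, _⟩ := Relation.TransGen.head'_iff.1 hx
    exact hD _ _ hy.1
  intro α β _ _
  have key : ∀ T : Set V, ∃ γ : V → Fin k,
      Relation.ReflTransGen (RecolStep D k) α γ ∧ ∀ w ∈ T, γ w = β w := by
    intro T
    induction T, Set.toFinite T using Set.Finite.induction_on with
    | empty => exact ⟨α, .refl, by simp⟩
    | @insert a s _ _ ih =>
      obtain ⟨γ, p, hγ⟩ := ih
      refine ⟨Function.update γ a (β a), p.trans (step_of_agree a (hdic _) (hdic _) ?_), ?_⟩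
      · intro w hw
        rw [Function.update_of_ne hw]
      · intro w hw
        by_cases hwa : w = a
        · rw [hwa, Function.update_self]
        · rw [Function.update_of_ne hwa]
          exact hγ w (hw.resolve_left hwa)
  obtain ⟨γ, p, hγ⟩ := key Set.univ
  have : γ = β := funext fun w => hγ w trivial
  exact this ▸ p

theorem mixing_restr {V : Type} [Finite V] (D : V → V → Prop)
    (hloopless : ∀ v, ¬ D v v) (d k : ℕ)
    (hd : ∀ S : Set V, S.Nonempty → ∃ v ∈ S, min (outDegOn D S v) (inDegOn D S v) ≤ d)
    (hk : d + 2 ≤ k) (n : ℕ) : ∀ S : Set V, S.ncard = n → Mixing (restr D S) k := by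
  induction n with
  | zero =>
    intro S hS
    rw [Set.ncard_eq_zero (Set.toFinite _)] at hS
    subst hS
    exact path_of_empty fun u v h => h.2.1
  | succ n ih =>
    intro S hS α β hα hβ
    have hne : S.Nonempty := by
      rw [← Set.ncard_pos (Set.toFinite _)]
      omega
    obtain ⟨v, hv, hmin⟩ := hd S hne
    have hS' : (S \ {v}).ncard = n := by
      rw [Set.ncard_diff_singleton_of_mem hv]
      omega
    have hp := ih _ hS' α β (dic_mono Set.diff_subset hα) (dic_mono Set.diff_subset hβ)
    obtain ⟨N, hvN, hNd, hN⟩ : ∃ N : Set V, v ∉ N ∧ N.ncard ≤ d ∧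
        ((∀ w ∈ S, D v w → w ∈ N) ∨ (∀ w ∈ S, D w v → w ∈ N)) := by
      rcases min_le_iff.1 hmin with h | h
      · exact ⟨_, fun hh => hloopless v hh.2, h, Or.inl fun w hw hw' => ⟨hw, hw'⟩⟩
      · exact ⟨_, fun hh => hloopless v hh.2, h, Or.inr fun w hw hw' => ⟨hw, hw'⟩⟩
    obtain ⟨γ, p, hγ, hag⟩ := lift_path hk hvN hNd hN hp hα
    exact p.trans (step_of_agree v hγ hβ hag)

/-- Every digraph `D` is `k`-mixing for every `k ≥ δ*_min(D) + 2`, where the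
min-degeneracy `δ*_min(D)` is the least `d` such that every nonempty subdigraph
has a vertex `v` with `min (d⁺ v) (d⁻ v) ≤ d`. -/
theorem min_degeneracy_mixing {V : Type} [Fintype V] (D : V → V → Prop)
    (hloopless : Irreflexive D) (d k : ℕ)
    (hd : ∀ S : Set V, S.Nonempty → ∃ v ∈ S, min (outDegOn D S v) (inDegOn D S v) ≤ d)
    (hk : d + 2 ≤ k) :
    Mixing D k := by
  have h := mixing_restr D (fun v hv => hloopless v hv) d k hd hk _ Set.univ rfl
  have e : restr D Set.univ = D := by
    funext u v
    simp [restr]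
  rwa [e] at h
end

section
/- Every oriented graph G⃗ is k-mixing for every integer k ≥ δ*_max(G⃗) + 1, where δ*_max denotes the max-degeneracy. -/
/-- Restriction of `D` to `S`. -/
def restrOn {V : Type} (D : V → V → Prop) (S : Finset V) : V → V → Prop :=
  fun a b => D a b ∧ a ∈ S ∧ b ∈ S

theorem reach_of_agree {V : Type} {D : V → V → Prop} {k : ℕ} {α β : V → Fin k} (v : V)
    (ha : IsDicolouring D k α) (hb : IsDicolouring D k β) (h : ∀ w, w ≠ v → α w = β w) :
    Relation.ReflTransGen (RecolStep D k) α β := by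
  by_cases hv : α v = β v
  · have : α = β := by
      funext w
      by_cases hw : w = v
      · rw [hw, hv]
      · exact h w hw
    rw [this]
  · exact Relation.ReflTransGen.single ⟨ha, hb, v, hv, h⟩

theorem acyclic_mono {V : Type} {r s : V → V → Prop} (h : ∀ a b, r a b → s a b)
    (hs : RelAcyclic s) : RelAcyclic r :=
  fun v hv => hs v (Relation.TransGen.mono h _ _ hv)

theorem acyclic_out {V : Type} {r : V → V → Prop} (v : V) (hv : ∀ w, ¬ r v w)
    (h : RelAcyclic (fun a b => r a b ∧ a ≠ v ∧ b ≠ v)) : RelAcyclic r := by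
  have hne : ∀ a b, r a b → a ≠ v := by
    rintro a b hab rfl
    exact hv b hab
  have hne2 : ∀ a b, Relation.TransGen r a b → a ≠ v := by
    intro a b hab
    obtain ⟨c, hc, -⟩ := (Relation.TransGen.head'_iff).1 hab
    exact hne _ _ hc
  intro u hu
  have huv := hne2 u u hu
  apply h u
  have key : ∀ a b, Relation.TransGen r a b → b ≠ v →
      Relation.TransGen (fun a b => r a b ∧ a ≠ v ∧ b ≠ v) a b := by
    intro a b hab
    induction hab with
    | single h1 => intro hb; exact .single ⟨h1, hne _ _ h1, hb⟩
    | tail _ h2 ih =>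
      intro hb
      exact .tail (ih (hne _ _ h2)) ⟨h2, hne _ _ h2, hb⟩
  exact key u u hu huv

theorem acyclic_swap {V : Type} {r : V → V → Prop} (h : RelAcyclic r) :
    RelAcyclic (fun a b => r b a) := by
  intro v hv
  exact h v (Relation.TransGen.swap (r := fun a b => r b a) _ _ hv)

theorem acyclic_in {V : Type} {r : V → V → Prop} (v : V) (hv : ∀ w, ¬ r w v)
    (h : RelAcyclic (fun a b => r a b ∧ a ≠ v ∧ b ≠ v)) : RelAcyclic r := by
  have := acyclic_out (r := fun a b => r b a) v hv
    (acyclic_mono (fun a b h => ⟨h.1, h.2.2, h.2.1⟩) (acyclic_swap h))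
  exact acyclic_swap this

open Classical in
theorem dicol_extend {V : Type} {D : V → V → Prop} {k : ℕ} {S : Finset V} {v : V}
    {γ γ' : V → Fin k} (hγ : IsDicolouring (restrOn D (S.erase v)) k γ)
    (hag : ∀ w, w ≠ v → γ' w = γ w)
    (h : (∀ w, restrOn D S v w → γ' w ≠ γ' v) ∨ (∀ w, restrOn D S w v → γ' w ≠ γ' v)) :
    IsDicolouring (restrOn D S) k γ' := by
  intro c
  have base : RelAcyclic (fun a b => (restrOn D S a b ∧ γ' a = c ∧ γ' b = c) ∧ a ≠ v ∧ b ≠ v) := by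
    refine acyclic_mono ?_ (hγ c)
    rintro a b ⟨⟨⟨h1, h2, h3⟩, h4, h5⟩, ha, hb⟩
    exact ⟨⟨h1, Finset.mem_erase.2 ⟨ha, h2⟩, Finset.mem_erase.2 ⟨hb, h3⟩⟩,
      by rw [← hag a ha, h4], by rw [← hag b hb, h5]⟩
  rcases h with h | h
  · exact acyclic_out v (fun w hw => h w hw.1 (by rw [hw.2.1, hw.2.2])) base
  · exact acyclic_in v (fun w hw => h w hw.1 (by rw [hw.2.1, hw.2.2])) base

theorem exists_colour {V : Type} [Fintype V] {k d : ℕ} (hk : d + 1 ≤ k) (N : Set V)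
    (hN : N.ncard ≤ d) (γ : V → Fin k) : ∃ c, ∀ w ∈ N, γ w ≠ c := by
  by_contra! hcon
  have h1 : γ '' N = Set.univ := by
    ext c
    simpa using hcon c
  have h2 := Set.ncard_image_le (f := γ) (Set.toFinite N)
  rw [h1, Set.ncard_univ, Nat.card_fin] at h2
  omega

open Classical in
theorem reach_restr {V : Type} [Fintype V] (D : V → V → Prop)
    (horiented : Oriented D) (d k : ℕ)
    (hd : ∀ S : Set V, S.Nonempty → ∃ v ∈ S, max (outDegOn D S v) (inDegOn D S v) ≤ d)
    (hk : d + 1 ≤ k) (S : Finset V) : ∀ α β : V → Fin k,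
    IsDicolouring (restrOn D S) k α → IsDicolouring (restrOn D S) k β →
    (∀ w, w ∉ S → α w = β w) → Relation.ReflTransGen (RecolStep (restrOn D S) k) α β := by
  induction S using Finset.strongInduction with
  | H S ih =>
  intro α β hα hβ hout
  rcases S.eq_empty_or_nonempty with rfl | hne
  · have : α = β := funext fun w => hout w (by simp)
    rw [this]
  obtain ⟨v, hvS, hv⟩ := hd (S : Set V) (by simpa using hne)
  have hvS : v ∈ S := by simpa using hvS
  have hvo : outDegOn D S v ≤ d := le_trans (le_max_left _ _) hv
  have hvi : inDegOn D S v ≤ d := le_trans (le_max_right _ _) hv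
  have down : ∀ γ γ' : V → Fin k, IsDicolouring (restrOn D S) k γ → (∀ w, w ≠ v → γ' w = γ w) →
      IsDicolouring (restrOn D (S.erase v)) k γ' := by
    intro γ γ' hγ hag c
    refine acyclic_mono ?_ (hγ c)
    rintro a b ⟨⟨h1, h2, h3⟩, h4, h5⟩
    rw [Finset.mem_erase] at h2 h3
    exact ⟨⟨h1, h2.2, h3.2⟩, by rw [← hag a h2.1, h4], by rw [← hag b h3.1, h5]⟩
  have hchain := ih (S.erase v) (Finset.erase_ssubset hvS) α (Function.update β v (α v))
    (down α α hα (fun _ _ => rfl))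
    (down β _ hβ (fun w hw => Function.update_of_ne hw _ _)) (by
      intro w hw
      by_cases hwv : w = v
      · subst hwv; simp
      · rw [Function.update_of_ne hwv]
        exact hout w (fun h => hw (Finset.mem_erase.2 ⟨hwv, h⟩)))
  have sim : ∀ γ, Relation.ReflTransGen (RecolStep (restrOn D (S.erase v)) k) α γ →
      ∃ γ', Relation.ReflTransGen (RecolStep (restrOn D S) k) α γ' ∧
        IsDicolouring (restrOn D S) k γ' ∧ ∀ w, w ≠ v → γ' w = γ w := by
    intro γ hγ
    induction hγ with
    | refl => exact ⟨α, .refl, hα, fun _ _ => rfl⟩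
    | @tail γ δ _ hstep ih2 =>
      obtain ⟨γ', hr, hdic, hag⟩ := ih2
      obtain ⟨hγd, hδd, w, hw, hwag⟩ := hstep
      by_cases hwv : w = v
      · subst hwv
        exact ⟨γ', hr, hdic, fun x hx => (hag x hx).trans (hwag x hx)⟩
      -- a colour for v good both before and after
      have hc : ∃ c : Fin k,
          (∀ x, restrOn D S v x → γ x ≠ c ∧ δ x ≠ c) ∨ (∀ x, restrOn D S x v → γ x ≠ c ∧ δ x ≠ c) := by
        by_cases hvw : D v w
        · obtain ⟨c, hc⟩ := exists_colour hk _ hvi γ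
          refine ⟨c, Or.inr fun x hx => ?_⟩
          have h1 := hc x ⟨by simpa using hx.2.1, hx.1⟩
          have hxw : x ≠ w := by rintro rfl; exact horiented _ _ hvw hx.1
          exact ⟨h1, by rw [← hwag x hxw]; exact h1⟩
        · obtain ⟨c, hc⟩ := exists_colour hk _ hvo γ
          refine ⟨c, Or.inl fun x hx => ?_⟩
          have h1 := hc x ⟨by simpa using hx.2.2, hx.1⟩
          have hxw : x ≠ w := by rintro rfl; exact hvw hx.1
          exact ⟨h1, by rw [← hwag x hxw]; exact h1⟩
      obtain ⟨c, hc⟩ := hc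
      have hloop : ¬ D v v := fun h => horiented _ _ h h
      have upd : ∀ ε : V → Fin k, ∀ x, x ≠ v → Function.update ε v c x = ε x :=
        fun ε x hx => Function.update_of_ne hx _ _
      have h1 : IsDicolouring (restrOn D S) k (Function.update γ v c) := by
        refine dicol_extend hγd (upd γ) ?_
        refine hc.imp ?_ ?_
        all_goals
          intro h x hx
          have hxv : x ≠ v := by rintro rfl; exact hloop hx.1
          rw [upd γ x hxv, Function.update_self]
          exact (h x hx).1
      have h2 : IsDicolouring (restrOn D S) k (Function.update δ v c) := by
        refine dicol_extend hδd (upd δ) ?_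
        refine hc.imp ?_ ?_
        all_goals
          intro h x hx
          have hxv : x ≠ v := by rintro rfl; exact hloop hx.1
          rw [upd δ x hxv, Function.update_self]
          exact (h x hx).2
      refine ⟨Function.update δ v c, ?_, h2, upd δ⟩
      refine (hr.trans (reach_of_agree v hdic h1 ?_)).trans (reach_of_agree w h1 h2 ?_)
      · intro x hx
        rw [upd γ x hx, hag x hx]
      · intro x hx
        by_cases hxv : x = v
        · subst hxv; simp
        · rw [upd γ x hxv, upd δ x hxv, hwag x hx]
  obtain ⟨β', hr, hdic, hag⟩ := sim _ hchain
  refine hr.trans (reach_of_agree v hdic hβ ?_)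
  intro x hx
  rw [hag x hx, Function.update_of_ne hx]

/-- Every oriented graph is `k`-mixing for every `k ≥ δ*_max + 1`, where the
max-degeneracy `δ*_max` is the least `d` such that every nonempty subdigraph
has a vertex `v` with `max (d⁺ v) (d⁻ v) ≤ d`. -/
theorem max_degeneracy_mixing {V : Type} [Fintype V] (D : V → V → Prop)
    (horiented : Oriented D) (d k : ℕ)
    (hd : ∀ S : Set V, S.Nonempty → ∃ v ∈ S, max (outDegOn D S v) (inDegOn D S v) ≤ d)
    (hk : d + 1 ≤ k) :
    Mixing D k := by
  intro α β hα hβ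
  have hE : restrOn D Finset.univ = D := by
    funext a b
    simp [restrOn]
  have := reach_restr D horiented d k hd hk Finset.univ α β
  rw [hE] at this
  exact this hα hβ (by simp)
end

section
/- For every positive integer k, there exists a k-out-degenerate oriented graph that is not (k+1)-mixing. -/
/-- The arcs: forward inside residue classes mod `k+2`, backward elsewhere. -/
def mixD (k : ℕ) (u v : Fin ((k+1)*(k+2))) : Prop :=
  (u.1 < v.1 ∧ u.1 % (k+2) = v.1 % (k+2)) ∨ (v.1 < u.1 ∧ u.1 % (k+2) ≠ v.1 % (k+2))

theorem mix_coprime (k : ℕ) : Nat.Coprime (k+1) (k+2) := by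
  have : Nat.Coprime (k+1) (k+1+1) := by simp
  exact this

theorem mix_dicol (k : ℕ) (f : Fin ((k+1)*(k+2)) → Fin (k+1))
    (hf : ∀ u v, f u = f v → u.1 % (k+1) = v.1 % (k+1)) :
    IsDicolouring (mixD k) (k+1) f := by
  intro c v h
  have key : ∀ a b, Relation.TransGen
      (fun u v => mixD k u v ∧ f u = c ∧ f v = c) a b → b.1 < a.1 := by
    have one : ∀ a b, (mixD k a b ∧ f a = c ∧ f b = c) → b.1 < a.1 := by
      rintro a b ⟨h1, h2, h3⟩
      rcases h1 with ⟨hlt, he⟩ | h1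
      · exfalso
        have e1 := hf a b (h2.trans h3.symm)
        have := (Nat.modEq_and_modEq_iff_modEq_mul (mix_coprime k)).1 ⟨e1, he⟩
        have := this.eq_of_lt_of_lt a.2 b.2
        omega
      · exact h1.1
    intro a b hab
    induction hab with
    | single h => exact one _ _ h
    | tail _ h ih => exact (one _ _ h).trans ih
  exact lt_irrefl _ (key v v h)

theorem mix_tri {V : Type} {D : V → V → Prop} {m : ℕ} {f : V → Fin m}
    (hf : IsDicolouring D m f) {a b c : V} (h1 : D a b) (h2 : D b c) (h3 : D c a)
    (e1 : f a = f b) (e2 : f b = f c) : False :=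
  hf (f a) a (((Relation.TransGen.single ⟨h1, rfl, e1.symm⟩).tail
    ⟨h2, e1.symm, (e1.trans e2).symm⟩).tail ⟨h3, (e1.trans e2).symm, rfl⟩)

theorem mix_far {N a b : ℕ} (h : a < b) (he : a % N = b % N) : a + N ≤ b := by
  have : N ∣ b - a := (Nat.modEq_iff_dvd' h.le).1 he
  have := Nat.le_of_dvd (by omega) this
  omega

theorem mix_near {N a b : ℕ} (h : a < b) (hb : b < a + N) : a % N ≠ b % N := by
  intro he
  have := mix_far h he
  omega

/-- The base colouring. -/
def mixCol (k : ℕ) (u : Fin ((k+1)*(k+2))) : Fin (k+1) :=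
  ⟨u.1 % (k+1), Nat.mod_lt _ (Nat.succ_pos k)⟩

theorem mix_frozen (k : ℕ) (g : Fin ((k+1)*(k+2)) → Fin (k+1))
    (hg : IsDicolouring (mixD k) (k+1) g) (v : Fin ((k+1)*(k+2)))
    (hv : mixCol k v ≠ g v) (hw : ∀ w, w ≠ v → mixCol k w = g w) : False := by
  obtain ⟨u, hu1, hu2⟩ := Nat.chineseRemainder (mix_coprime k) (g v).1 v.1
  have hgv := (g v).2
  have hpos : 0 < ((k+1)*(k+2)) := by positivity
  have hlt : u % ((k+1)*(k+2)) < ((k+1)*(k+2)) := Nat.mod_lt _ hpos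
  have h1 : (u % ((k+1)*(k+2))) % (k+1) = (g v).1 := by
    rw [Nat.mod_mul_right_mod, hu1, Nat.mod_eq_of_lt hgv]
  have h2 : (u % ((k+1)*(k+2))) % (k+2) = v.1 % (k+2) := by
    rw [Nat.mod_mul_left_mod]; exact hu2
  generalize u % ((k+1)*(k+2)) = x at hlt h1 h2
  have hne : v.1 % (k+1) ≠ (g v).1 := fun h => hv (Fin.ext h)
  have hxv : x ≠ v.1 := by rintro rfl; exact hne h1
  have col : ∀ y (hy : y < ((k+1)*(k+2))), y ≠ v.1 → y % (k+1) = (g v).1 → g v = g ⟨y, hy⟩ := by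
    intro y hy hyv hyc
    rw [← hw ⟨y, hy⟩ (fun h => hyv (congrArg Fin.val h))]
    exact Fin.ext hyc.symm
  have hvn := v.2
  rcases lt_or_gt_of_ne hxv with hlt' | hlt'
  · -- x < v
    have hfar := mix_far hlt' h2
    have hwn : x + (k+1) < ((k+1)*(k+2)) := by omega
    have c1 := col x hlt hxv h1
    have c2 := col (x + (k+1)) hwn (by omega) (by simpa using h1)
    have m : x % (k+2) ≠ (x + (k+1)) % (k+2) := mix_near (by omega) (by omega)
    refine mix_tri hg (a := v) (b := ⟨x + (k+1), hwn⟩) (c := ⟨x, hlt⟩) ?_ ?_ ?_ c2 (c2.symm.trans c1)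
    · exact Or.inr ⟨by simp only; omega, by simp only; rw [← h2]; exact m⟩
    · exact Or.inr ⟨by simp only; omega, m.symm⟩
    · exact Or.inl ⟨hlt', h2⟩
  · have hfar := mix_far hlt' h2.symm
    obtain ⟨i, hi, hic⟩ : ∃ i, i < k + 1 ∧ (v.1 + i) % (k+1) = (g v).1 := by
      refine ⟨(x - v.1) % (k+1), Nat.mod_lt _ (Nat.succ_pos k), ?_⟩
      rw [Nat.add_mod_mod, ← h1]; congr 1; omega
    have hi0 : i ≠ 0 := by rintro rfl; exact hne hic
    have hwn : v.1 + i < ((k+1)*(k+2)) := by omega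
    have c1 := col x hlt hxv h1
    have c2 := col (v.1 + i) hwn (by omega) hic
    have m : v.1 % (k+2) ≠ (v.1 + i) % (k+2) := mix_near (by omega) (by omega)
    refine mix_tri hg (a := v) (b := ⟨x, hlt⟩) (c := ⟨v.1 + i, hwn⟩) ?_ ?_ ?_ c1 (c1.symm.trans c2)
    · exact Or.inl ⟨hlt', h2.symm⟩
    · exact Or.inr ⟨by simp only; omega, by simp only; rw [h2]; exact m⟩
    · exact Or.inr ⟨by simp only; omega, m.symm⟩

theorem mix_deg (k : ℕ) (S : Set (Fin ((k+1)*(k+2)))) (hS : S.Nonempty) :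
    ∃ v ∈ S, outDegOn (mixD k) S v ≤ k := by
  obtain ⟨v, hv, hmin⟩ := S.toFinite.exists_minimal hS
  refine ⟨v, hv, ?_⟩
  have hmem : ∀ w ∈ {w ∈ S | mixD k v w}, v.1 < w.1 ∧ v.1 % (k+2) = w.1 % (k+2) := by
    rintro w ⟨hw, h | h⟩
    · exact h
    · have := hmin hw h.1.le
      have := h.1
      omega
  unfold outDegOn
  have := Set.ncard_le_ncard_of_injOn (s := {w ∈ S | mixD k v w})
    (t := ((Finset.Icc 1 k : Finset ℕ) : Set ℕ)) (fun w => w.1 / (k+2)) ?_ ?_ (Finset.finite_toSet _)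
  · simpa using this
  · intro w hw
    obtain ⟨a, b⟩ := hmem w hw
    have hfar := mix_far a b
    have h1 : w.1 / (k+2) < k+1 := Nat.div_lt_of_lt_mul (w.2.trans_eq (Nat.mul_comm _ _))
    have h2 : 0 < w.1 / (k+2) := Nat.div_pos (by omega) (by omega)
    simp only [Finset.coe_Icc, Set.mem_Icc]
    omega
  · intro w hw z hz h
    have a := (hmem w hw).2
    have b := (hmem z hz).2
    have e1 := Nat.div_add_mod w.1 (k+2)
    have e2 := Nat.div_add_mod z.1 (k+2)
    simp only at h
    apply Fin.ext
    rw [← e1, ← e2, h, ← a, ← b]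

/-- For every positive integer `k`, there exists a `k`-out-degenerate oriented
graph that is not `(k+1)`-mixing. -/
theorem exists_out_degenerate_not_mixing (k : ℕ) (hk : 1 ≤ k) :
    ∃ (n : ℕ) (D : Fin n → Fin n → Prop),
      Oriented D ∧
      (∀ S : Set (Fin n), S.Nonempty → ∃ v ∈ S, outDegOn D S v ≤ k) ∧
      ¬ Mixing D (k + 1) := by
  refine ⟨(k+1)*(k+2), mixD k, ?_, mix_deg k, ?_⟩
  · intro u v h h'
    unfold mixD at h h'
    omega
  · intro hM
    have := hM (mixCol k) (fun v => (mixCol k v).rev)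
      (mix_dicol k _ fun u v h => congrArg Fin.val h)
      (mix_dicol k _ fun u v h => congrArg Fin.val (Fin.rev_injective h))
    rcases this.cases_head with h | ⟨g, ⟨_, hg, v, hv, hw⟩, _⟩
    · have h0 : 0 < (k+1)*(k+2) := by positivity
      have := congrArg Fin.val (congrFun h ⟨0, h0⟩)
      simp [mixCol, Fin.rev] at this
      omega
    · exact mix_frozen k g hg v hv hw
end

section
/- There exists a constant C such that for every digraph D on n vertices and every integer k ≥ (3/2)·(δ*_min(D) + 1), the diameter of the k-dicolouring graph D_k(D) is at most C·n²; in particular C does not depend on k or on D. -/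
section Helpers

variable {V : Type} {k : ℕ}

def Dic (D : V → V → Prop) (T : Set V) (g : V → Fin k) : Prop :=
  RelAcyclic (fun a b => a ∈ T ∧ b ∈ T ∧ D a b ∧ g a = g b)

lemma relAcyclic_mono {r s : V → V → Prop} (h : ∀ a b, r a b → s a b) (hs : RelAcyclic s) :
    RelAcyclic r := fun v hv => hs v (Relation.TransGen.mono h _ _ hv)

lemma relAcyclic_swap {r : V → V → Prop} (h : RelAcyclic r) : RelAcyclic (Function.swap r) :=
  fun v hv => h v (Relation.transGen_swap.1 hv)

lemma relAcyclic_sink {r s : V → V → Prop} (v : V) (hr : RelAcyclic r)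
    (h1 : ∀ b, ¬ s v b) (h2 : ∀ a b, s a b → r a b ∨ b = v) : RelAcyclic s := by
  intro x hx
  have key : ∀ y, Relation.TransGen s x y → y = v ∨ Relation.TransGen r x y := by
    intro y hy
    induction hy with
    | single h =>
      rcases h2 _ _ h with h | h
      · exact Or.inr (.single h)
      · exact Or.inl h
    | tail _ h ih =>
      rcases ih with rfl | ih
      · exact absurd h (h1 _)
      · rcases h2 _ _ h with h | h
        · exact Or.inr (ih.tail h)
        · exact Or.inl h
  rcases key x hx with rfl | h
  · rcases Relation.TransGen.head'_iff.1 hx with ⟨b, hb, _⟩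
    exact h1 _ hb
  · exact hr x h

lemma dic_congr_s5 {D : V → V → Prop} {T T' : Set V} {g g' : V → Fin k} (hT : T' ⊆ T)
    (h : ∀ v ∈ T', g v = g' v) (hd : Dic D T g) : Dic D T' g' := by
  refine relAcyclic_mono ?_ hd
  rintro a b ⟨ha, hb, hD, he⟩
  exact ⟨hT ha, hT hb, hD, by rw [h a ha, h b hb, he]⟩

lemma isDic_iff {D : V → V → Prop} {g : V → Fin k} : IsDicolouring D k g ↔ Dic D Set.univ g := by
  constructor
  · intro h v hv
    have key : ∀ y, Relation.TransGen
        (fun a b => a ∈ Set.univ ∧ b ∈ Set.univ ∧ D a b ∧ g a = g b) v y →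
        g y = g v ∧ Relation.TransGen (fun a b => D a b ∧ g a = g v ∧ g b = g v) v y := by
      intro y hy
      induction hy with
      | single h => exact ⟨h.2.2.2.symm, .single ⟨h.2.2.1, rfl, h.2.2.2.symm⟩⟩
      | tail _ h ih =>
        have := h.2.2.2.symm.trans ih.1
        exact ⟨this, ih.2.tail ⟨h.2.2.1, ih.1, this⟩⟩
    exact h (g v) v (key v hv).2
  · intro h c
    refine relAcyclic_mono ?_ h
    rintro a b ⟨h1, h2, h3⟩
    exact ⟨trivial, trivial, h1, h2.trans h3.symm⟩

lemma dic_insert {D : V → V → Prop} (hD : ∀ v, ¬ D v v) {T : Set V} {g : V → Fin k} {v : V}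
    {N : Finset V}
    (hN : (∀ w ∈ T, D v w → w ∈ N) ∨ (∀ w ∈ T, D w v → w ∈ N))
    (hg : ∀ w ∈ N, g w ≠ g v) (hd : Dic D T g) : Dic D (insert v T) g := by
  rcases hN with hN | hN
  · refine relAcyclic_sink v hd ?_ ?_
    · rintro b ⟨-, hb, h1, h2⟩
      rcases hb with rfl | hb
      · exact hD _ h1
      · exact hg b (hN b hb h1) h2.symm
    · rintro a b ⟨ha, hb, h1, h2⟩
      by_cases hbv : b = v
      · exact Or.inr hbv
      left
      replace hb : b ∈ T := hb.resolve_left hbv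
      rcases ha with rfl | ha
      · exact absurd h2.symm (hg b (hN b hb h1))
      · exact ⟨ha, hb, h1, h2⟩
  · have := relAcyclic_sink (s := Function.swap
      (fun a b => a ∈ insert v T ∧ b ∈ insert v T ∧ D a b ∧ g a = g b)) v (relAcyclic_swap hd) ?_ ?_
    · exact relAcyclic_swap this
    · rintro b ⟨hb, -, h1, h2⟩
      rcases hb with rfl | hb
      · exact hD _ h1
      · exact hg b (hN b hb h1) h2
    · rintro a b ⟨hb, ha, h1, h2⟩
      by_cases hbv : b = v
      · exact Or.inr hbv
      left
      replace hb : b ∈ T := hb.resolve_left hbv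
      rcases ha with rfl | ha
      · exact absurd h2 (hg b (hN b hb h1))
      · exact ⟨hb, ha, h1, h2⟩

lemma dic_lift {D : V → V → Prop} {B : Finset (Fin k)} {g b : V → Fin k}
    (hb : Dic D Set.univ b) (h1 : ∀ v, g v ∈ B → g v = b v) (h2 : Dic D {v | g v ∉ B} g) :
    Dic D Set.univ g := by
  intro x hx
  by_cases hxB : g x ∈ B
  · have key : ∀ y, Relation.TransGen
        (fun a b => a ∈ Set.univ ∧ b ∈ Set.univ ∧ D a b ∧ g a = g b) x y →
        g y = g x ∧ Relation.TransGen
          (fun p q => p ∈ Set.univ ∧ q ∈ Set.univ ∧ D p q ∧ b p = b q) x y := by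
      intro y hy
      induction hy with
      | @single y h =>
        refine ⟨h.2.2.2.symm, .single ⟨trivial, trivial, h.2.2.1, ?_⟩⟩
        rw [← h1 x hxB, ← h1 y (h.2.2.2 ▸ hxB), h.2.2.2]
      | @tail y z _ h ih =>
        have := h.2.2.2.symm.trans ih.1
        refine ⟨this, ih.2.tail ⟨trivial, trivial, h.2.2.1, ?_⟩⟩
        rw [← h1 y (ih.1 ▸ hxB), ← h1 z (this ▸ hxB), h.2.2.2]
    exact hb x (key x hx).2
  · have key : ∀ y, Relation.TransGen
        (fun a b => a ∈ Set.univ ∧ b ∈ Set.univ ∧ D a b ∧ g a = g b) x y →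
        g y = g x ∧ Relation.TransGen
          (fun p q => p ∈ {v | g v ∉ B} ∧ q ∈ {v | g v ∉ B} ∧ D p q ∧ g p = g q) x y := by
      intro y hy
      induction hy with
      | @single y h =>
        exact ⟨h.2.2.2.symm, .single ⟨hxB, by simpa [← h.2.2.2] using hxB, h.2.2.1, h.2.2.2⟩⟩
      | @tail y z _ h ih =>
        have := h.2.2.2.symm.trans ih.1
        exact ⟨this, ih.2.tail ⟨by simpa [ih.1] using hxB, by simpa [this] using hxB,
          h.2.2.1, h.2.2.2⟩⟩
    exact h2 x (key x hx).2

/-- reachability within `m` recolourings -/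
def Reach (D : V → V → Prop) (k m : ℕ) (a b : V → Fin k) : Prop :=
  ∃ (j : ℕ) (γ : ℕ → V → Fin k), γ 0 = a ∧ γ j = b ∧ RecolWalk D k j γ ∧ j ≤ m

lemma Reach.refl {D : V → V → Prop} {a : V → Fin k} (m : ℕ) (h : Dic D Set.univ a) :
    Reach D k m a a :=
  ⟨0, fun _ => a, rfl, rfl, ⟨fun _ _ => isDic_iff.2 h, fun i hi => by omega⟩, by omega⟩

lemma Reach.mono {D : V → V → Prop} {a b : V → Fin k} {m m' : ℕ} (h : Reach D k m a b)
    (hm : m ≤ m') : Reach D k m' a b := by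
  obtain ⟨j, γ, h1, h2, h3, h4⟩ := h
  exact ⟨j, γ, h1, h2, h3, h4.trans hm⟩

lemma Reach.symm {D : V → V → Prop} {a b : V → Fin k} {m : ℕ} (h : Reach D k m a b) :
    Reach D k m b a := by
  obtain ⟨j, γ, h1, h2, h3, h4⟩ := h
  refine ⟨j, fun i => γ (j - i), by simpa using h2, by simpa using h1, ⟨?_, ?_⟩, h4⟩
  · intro i _
    exact h3.1 _ (by omega)
  · intro i hi
    obtain ⟨v, hv, hw⟩ := h3.2 (j - (i+1)) (by omega)
    have : j - (i+1) + 1 = j - i := by omega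
    rw [this] at hv hw
    exact ⟨v, hv.symm, fun w h => (hw w h).symm⟩

lemma Reach.trans {D : V → V → Prop} {a b c : V → Fin k} {m m' : ℕ} (h : Reach D k m a b)
    (h' : Reach D k m' b c) : Reach D k (m + m') a c := by
  obtain ⟨j, γ, h1, h2, h3, h4⟩ := h
  obtain ⟨j', γ', h1', h2', h3', h4'⟩ := h'
  refine ⟨j + j', fun i => if i ≤ j then γ i else γ' (i - j), by simpa using h1, ?_, ⟨?_, ?_⟩,
    by omega⟩
  · by_cases hj : j' = 0
    · subst hj
      simp [h2, ← h2', h1']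
    · simp [hj, h2']
  · intro i hi
    by_cases h : i ≤ j
    · simpa [h] using h3.1 i h
    · simpa [h] using h3'.1 (i - j) (by omega)
  · intro i hi
    rcases lt_trichotomy i j with h | h | h
    · have h5 : i + 1 ≤ j := h
      simpa [h.le, h5] using h3.2 i h
    · subst h
      simpa [h2, ← h1'] using h3'.2 0 (by omega)
    · have h5 : ¬ (i ≤ j) := by omega
      have h6 : ¬ (i + 1 ≤ j) := by omega
      have h7 : i + 1 - j = i - j + 1 := by omega
      simpa [h5, h6, h7] using h3'.2 (i - j) (by omega)

lemma Reach.step [DecidableEq V] {D : V → V → Prop} {a : V → Fin k} (v : V) (c : Fin k)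
    (h : Dic D Set.univ a) (h' : Dic D Set.univ (Function.update a v c)) :
    Reach D k 1 a (Function.update a v c) := by
  by_cases hc : a v = c
  · subst hc
    simpa using Reach.refl 1 h
  · refine ⟨1, fun i => if i = 0 then a else Function.update a v c, by simp, by simp, ⟨?_, ?_⟩,
      le_rfl⟩
    · intro i _
      by_cases hi : i = 0
      · simpa [hi] using isDic_iff.2 h
      · simpa [hi] using isDic_iff.2 h'
    · intro i hi
      have : i = 0 := by omega
      subst this
      refine ⟨v, by simpa using hc, ?_⟩
      intro w hw
      simp [Function.update_of_ne hw]

def run [DecidableEq V] (g : V → Fin k) : List (V × Fin k) → V → Fin k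
  | [] => g
  | p :: l => run (Function.update g p.1 p.2) l

def Valid [DecidableEq V] (D : V → V → Prop) (T : Set V) (g : V → Fin k) :
    List (V × Fin k) → Prop
  | [] => Dic D T g
  | p :: l => Dic D T g ∧ Valid D T (Function.update g p.1 p.2) l

variable [DecidableEq V]

lemma Valid.dic {D : V → V → Prop} {T : Set V} {g : V → Fin k} {l : List (V × Fin k)}
    (h : Valid D T g l) : Dic D T g := by
  cases l with
  | nil => exact h
  | cons p l => exact h.1

lemma update_congr_on {T : Set V} {g g' : V → Fin k} (h : ∀ v ∈ T, g v = g' v) (u : V)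
    (c : Fin k) : ∀ v ∈ T, Function.update g u c v = Function.update g' u c v := by
  intro v hv
  by_cases hvu : v = u
  · subst hvu; simp
  · simp [hvu, h v hv]

lemma Valid.congr {D : V → V → Prop} {T : Set V} {l : List (V × Fin k)} :
    ∀ {g g' : V → Fin k}, (∀ v ∈ T, g v = g' v) → Valid D T g l → Valid D T g' l := by
  induction l with
  | nil => intro g g' h hv; exact dic_congr_s5 le_rfl h hv
  | cons p l ih =>
    intro g g' h hv
    exact ⟨dic_congr_s5 le_rfl h hv.1, ih (update_congr_on h _ _) hv.2⟩

lemma run_congr {T : Set V} {l : List (V × Fin k)} :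
    ∀ {g g' : V → Fin k}, (∀ v ∈ T, g v = g' v) → ∀ v ∈ T, run g l v = run g' l v := by
  induction l with
  | nil => intro g g' h; exact h
  | cons p l ih => intro g g' h; exact ih (update_congr_on h _ _)

lemma run_append (l l' : List (V × Fin k)) : ∀ (g : V → Fin k),
    run g (l ++ l') = run (run g l) l' := by
  induction l with
  | nil => intro g; rfl
  | cons p l ih => intro g; exact ih _

lemma Valid.snoc {D : V → V → Prop} {T : Set V} (p : V × Fin k) {l : List (V × Fin k)} :
    ∀ {g : V → Fin k}, Valid D T g l → Dic D T (Function.update (run g l) p.1 p.2) →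
      Valid D T g (l ++ [p]) := by
  induction l with
  | nil => intro g h h'; exact ⟨h, h'⟩
  | cons q l ih => intro g h h'; exact ⟨h.1, ih h.2 h'⟩

lemma run_of_not_mem {l : List (V × Fin k)} {v : V} :
    ∀ {g : V → Fin k}, (∀ p ∈ l, p.1 ≠ v) → run g l v = g v := by
  induction l with
  | nil => intro g h; rfl
  | cons p l ih =>
    intro g h
    rw [run, ih (fun q hq => h q (List.mem_cons_of_mem _ hq))]
    rw [Function.update_of_ne (h p List.mem_cons_self).symm]

def cnt (u : V) (l : List (V × Fin k)) : ℕ := (l.map Prod.fst).count u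

def ml (N : Finset V) (l : List (V × Fin k)) : List (Fin k) :=
  (l.filter (fun p => decide (p.1 ∈ N))).map Prod.snd

lemma exists_avoid {s M : ℕ} (B C : Finset (Fin k)) (l : List (Fin k)) (hB : B.card ≤ s)
    (hC : C.card + 1 ≤ M) (hl : l.length ≤ M) (hk : s + 2 * M ≤ k) :
    ∃ c, c ∉ B ∧ c ∉ C ∧ c ∉ l := by
  by_contra hcon
  push Not at hcon
  have h1 : (Finset.univ : Finset (Fin k)) ⊆ B ∪ C ∪ l.toFinset := by
    intro c _
    simp only [Finset.mem_union, List.mem_toFinset]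
    by_cases h1 : c ∈ B
    · tauto
    · by_cases h2 : c ∈ C
      · tauto
      · exact Or.inr (hcon c h1 h2)
  have h2 := Finset.card_le_card h1
  have h3 := Finset.card_union_le (B ∪ C) l.toFinset
  have h4 := Finset.card_union_le B C
  have h5 := List.toFinset_card_le l
  rw [Finset.card_univ, Fintype.card_fin] at h2
  omega

lemma ext_inner {D : V → V → Prop} (hD : ∀ v, ¬ D v v) {T : Set V} {v : V} (hvT : v ∉ T)
    {N : Finset V} (hNT : ∀ w ∈ N, w ∈ T)
    (hN : (∀ w ∈ T, D v w → w ∈ N) ∨ (∀ w ∈ T, D w v → w ∈ N))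
    {B : Finset (Fin k)} {s M : ℕ} (hB : B.card ≤ s) (hNc : N.card + 1 ≤ M)
    (hk : s + 2 * M ≤ k) (l : List (V × Fin k)) :
    ∀ (g : V → Fin k) (a t : ℕ), Valid D T g l → (∀ p ∈ l, p.1 ∈ T) →
      (∀ w ∈ N, g w ≠ g v) → g v ∉ (ml N l).take a → (ml N l).length ≤ a + M * t →
      ∃ l' : List (V × Fin k), Valid D (insert v T) g l' ∧
        (∀ p ∈ l', p ∈ l ∨ (p.1 = v ∧ p.2 ∉ B)) ∧ cnt v l' ≤ t ∧
        (∀ u, u ≠ v → cnt u l' = cnt u l) ∧ (∀ u, u ≠ v → run g l' u = run g l u) := by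
  induction l with
  | nil =>
    intro g a t h1 h2 h3 h4 h5
    exact ⟨[], dic_insert hD hN h3 h1, by simp, by simp [cnt], by simp, by simp⟩
  | cons q l ih =>
    obtain ⟨u, x⟩ := q
    intro g a t h1 h2 h3 h4 h5
    have huT : u ∈ T := h2 (u, x) List.mem_cons_self
    have huv : u ≠ v := fun h => hvT (h ▸ huT)
    have hvN : ∀ w ∈ N, w ≠ v := fun w hw h => hvT (h ▸ hNT w hw)
    -- one move, when it does not take the colour of `v`
    have move : ∀ (g : V → Fin k) (a t : ℕ), Valid D T g ((u, x) :: l) →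
        (∀ w ∈ N, g w ≠ g v) → (u ∈ N → x ≠ g v) → g v ∉ (ml N l).take a →
        (ml N l).length ≤ a + M * t →
        ∃ l' : List (V × Fin k), Valid D (insert v T) g l' ∧
        (∀ p ∈ l', p ∈ (u, x) :: l ∨ (p.1 = v ∧ p.2 ∉ B)) ∧ cnt v l' ≤ t ∧
        (∀ u', u' ≠ v → cnt u' l' = cnt u' ((u, x) :: l)) ∧
        (∀ u', u' ≠ v → run g l' u' = run g ((u, x) :: l) u') := by
      intro g a t h1 h3 hx h4 h5
      have hgv : Function.update g u x v = g v := Function.update_of_ne huv.symm _ _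
      obtain ⟨l', e1, e2, e3, e4, e5⟩ := ih (Function.update g u x) a t h1.2
        (fun p hp => h2 p (List.mem_cons_of_mem _ hp)) (by
          intro w hw
          rw [hgv]
          by_cases hwu : w = u
          · subst hwu; simpa using hx hw
          · rw [Function.update_of_ne hwu]; exact h3 w hw) (by rwa [hgv]) h5
      refine ⟨(u, x) :: l', ⟨dic_insert hD hN h3 h1.1, e1⟩, ?_, ?_, ?_, ?_⟩
      · intro p hp
        rcases List.mem_cons.1 hp with rfl | hp
        · exact Or.inl List.mem_cons_self
        · rcases e2 p hp with h | h
          · exact Or.inl (List.mem_cons_of_mem _ h)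
          · exact Or.inr h
      · simpa [cnt, List.count_cons, huv] using e3
      · intro u' hu'
        have := e4 u' hu'
        simp only [cnt] at this
        simp [cnt, List.count_cons, this]
      · intro u' hu'
        exact e5 u' hu'
    by_cases huN : u ∈ N
    · have hml : ml N ((u, x) :: l) = x :: ml N l := by simp [ml, huN]
      rw [hml] at h4 h5
      cases a with
      | succ a =>
        simp only [List.take_succ_cons, List.mem_cons, not_or] at h4
        exact move g a t h1 h3 (fun _ => fun h => h4.1 h.symm) h4.2 (by simp at h5; omega)
      | zero =>
        cases t with
        | zero => simp at h5
        | succ t =>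
          obtain ⟨c, c1, c2, c3⟩ := exists_avoid B (N.image g) ((x :: ml N l).take M) hB
            (by have := Finset.card_image_le (s := N) (f := g); omega) (by simp) hk
          obtain ⟨M', rfl⟩ : ∃ M', M = M' + 1 := ⟨M - 1, by omega⟩
          simp only [List.take_succ_cons, List.mem_cons, not_or] at c3
          have hg' : ∀ w ∈ T, g w = Function.update g v c w := by
            intro w hw
            rw [Function.update_of_ne]
            rintro rfl
            exact hvT hw
          obtain ⟨l', e1, e2, e3, e4, e5⟩ := move (Function.update g v c) M' t
            (Valid.congr hg' h1) (by
              intro w hw h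
              rw [Function.update_of_ne (hvN w hw), Function.update_self] at h
              exact c2 (Finset.mem_image.2 ⟨w, hw, h⟩))
            (fun _ => by simpa using fun h => c3.1 h.symm) (by simpa using c3.2)
            (by
              simp only [List.length_cons] at h5
              have : (M' + 1) * (t + 1) = (M' + 1) * t + (M' + 1) := by ring
              omega)
          refine ⟨(v, c) :: l', ⟨dic_insert hD hN h3 h1.1, e1⟩, ?_, ?_, ?_, ?_⟩
          · intro p hp
            rcases List.mem_cons.1 hp with rfl | hp
            · exact Or.inr ⟨rfl, c1⟩
            · exact e2 p hp
          · simp only [cnt] at e3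
            simp [cnt, e3]
          · intro u' hu'
            rw [← e4 u' hu']
            simp [cnt, List.count_cons, hu'.symm]
          · intro u' hu'
            have := e5 u' hu'
            rw [run, this]
            exact run_congr (T := {v}ᶜ) (fun w hw => Function.update_of_ne hw _ _) u' hu'
    · have hml : ml N ((u, x) :: l) = ml N l := by simp [ml, huN]
      rw [hml] at h4 h5
      exact move g a t h1 h3 (fun h => absurd h huN) h4 h5

lemma ml_length (N : Finset V) (l : List (V × Fin k)) :
    (ml N l).length = ∑ u ∈ N, cnt u l := by
  induction l with
  | nil => simp [ml, cnt]
  | cons p l ih =>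
    have h1 : ∑ u ∈ N, cnt u (p :: l) = ∑ u ∈ N, cnt u l + if p.1 ∈ N then 1 else 0 := by
      simp only [cnt, List.map_cons, List.count_cons, Finset.sum_add_distrib]
      congr 1
      simp
    rw [h1, ← ih]
    by_cases h : p.1 ∈ N <;> simp [ml, h]

/-- Extending a redicolouring sequence to one more vertex. -/
lemma ext_vertex {D : V → V → Prop} (hD : ∀ v, ¬ D v v) {T : Set V} {v : V} (hvT : v ∉ T)
    {N : Finset V} (hNT : ∀ w ∈ N, w ∈ T)
    (hN : (∀ w ∈ T, D v w → w ∈ N) ∨ (∀ w ∈ T, D w v → w ∈ N))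
    {B : Finset (Fin k)} {s M : ℕ} (hB : B.card ≤ s) (hNc : N.card + 1 ≤ M)
    (hk : s + 2 * M ≤ k) (l : List (V × Fin k)) (g b : V → Fin k)
    (hg : Dic D (insert v T) g) (hb : Dic D (insert v T) b) (hbv : b v ∉ B)
    (h1 : Valid D T g l) (h2 : ∀ p ∈ l, p.1 ∈ T) (h3 : ∀ w ∈ T, run g l w = b w)
    (h4 : ∀ u, cnt u l ≤ M + 1) :
    ∃ l' : List (V × Fin k), Valid D (insert v T) g l' ∧
        (∀ p ∈ l', p ∈ l ∨ (p.1 = v ∧ p.2 ∉ B)) ∧ (∀ w ∈ insert v T, run g l' w = b w) ∧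
        (∀ u, cnt u l' ≤ M + 1) := by
  have hvN : ∀ w ∈ N, w ≠ v := fun w hw h => hvT (h ▸ hNT w hw)
  obtain ⟨c, c1, c2, c3⟩ := exists_avoid B (N.image g) ((ml N l).take M) hB
    (by have := Finset.card_image_le (s := N) (f := g); omega) (by simp) hk
  obtain ⟨M', rfl⟩ : ∃ M', M = M' + 1 := ⟨M - 1, by omega⟩
  have hg' : ∀ w ∈ T, g w = Function.update g v c w := by
    intro w hw
    rw [Function.update_of_ne]
    rintro rfl
    exact hvT hw
  obtain ⟨l', e1, e2, e3, e4, e5⟩ := ext_inner hD hvT hNT hN hB hNc hk l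
    (Function.update g v c) (M' + 1) M' (Valid.congr hg' h1) h2 (by
              intro w hw h
              rw [Function.update_of_ne (hvN w hw), Function.update_self] at h
              exact c2 (Finset.mem_image.2 ⟨w, hw, h⟩)) (by simpa using c3) (by
        rw [ml_length]
        have := Finset.sum_le_card_nsmul N (fun u => cnt u l) (M' + 1 + 1) (fun u _ => h4 u)
        simp only [smul_eq_mul] at this
        have h5 : N.card * (M' + 1 + 1) ≤ M' * (M' + 1 + 1) :=
          Nat.mul_le_mul_right _ (by omega)
        nlinarith)
  have hfin : ∀ w ∈ insert v T,
      Function.update (run (Function.update g v c) l') v (b v) w = b w := by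
    intro w hw
    rcases hw with rfl | hw
    · simp
    · have hwv : w ≠ v := by rintro rfl; exact hvT hw
      rw [Function.update_of_ne hwv, e5 w hwv, ← h3 w hw]
      exact run_congr (T := T) (fun w hw => (hg' w hw).symm) w hw
  refine ⟨(v, c) :: (l' ++ [(v, b v)]), ⟨hg, Valid.snoc _ e1 ?_⟩, ?_, ?_, ?_⟩
  · exact dic_congr_s5 le_rfl (fun w hw => (hfin w hw).symm) hb
  · intro p hp
    simp only [List.mem_cons, List.mem_append, List.not_mem_nil, or_false] at hp
    rcases hp with rfl | hp | rfl
    · exact Or.inr ⟨rfl, c1⟩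
    · exact e2 p hp
    · exact Or.inr ⟨rfl, hbv⟩
  · intro w hw
    rw [run, run_append]
    exact hfin w hw
  · intro u
    by_cases hu : u = v
    · subst hu
      simp only [cnt] at e3
      simp [cnt, List.count_cons]
      omega
    · have := e4 u hu
      simp only [cnt] at this
      have h6 := h4 u
      simp only [cnt] at h6
      simpa [cnt, List.count_cons, this, Ne.symm hu] using h6

/-- The ordering data. -/
def Cov (D : V → V → Prop) (r : V → ℕ) (N : V → Finset V) : Prop :=
  ∀ v, (∀ w ∈ N v, r v < r w) ∧
    ((∀ w, r v < r w → D v w → w ∈ N v) ∨ (∀ w, r v < r w → D w v → w ∈ N v))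

lemma greedy_dic {D : V → V → Prop} (hD : ∀ v, ¬ D v v) {r : V → ℕ} (hr : Function.Injective r)
    {N : V → Finset V} (hc : Cov D r N) {f : ℕ} {a b : V → Fin k} (ha : Dic D Set.univ a)
    (hoff : ∀ v, f ≤ r v → b v = a v) (hg : ∀ v, r v < f → ∀ w ∈ N v, b w ≠ b v) :
    Dic D Set.univ b := by
  have key : ∀ j ≤ f, Dic D {v | f ≤ r v + j} b := by
    intro j
    induction j with
    | zero =>
      intro _
      exact dic_congr_s5 (Set.subset_univ _) (fun v hv => (hoff v (by simpa using hv)).symm) ha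
    | succ j ih =>
      intro hj
      have ih := ih (by omega)
      by_cases hv : ∃ v, r v + (j + 1) = f
      · obtain ⟨v, hv⟩ := hv
        have hset : {v | f ≤ r v + (j + 1)} = insert v {v | f ≤ r v + j} := by
          ext u
          simp only [Set.mem_setOf_eq, Set.mem_insert_iff]
          constructor
          · intro h
            by_cases hu : f ≤ r u + j
            · exact Or.inr hu
            · exact Or.inl (hr (by omega))
          · rintro (rfl | h) <;> omega
        rw [hset]
        refine dic_insert hD (N := N v) ?_ (hg v (by omega)) ih
        refine (hc v).2.imp ?_ ?_ <;>
        · intro h w hw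
          exact h w (by simp only [Set.mem_setOf_eq] at hw; omega)
      · have hset : {v | f ≤ r v + (j + 1)} = {v | f ≤ r v + j} := by
          ext u
          simp only [Set.mem_setOf_eq]
          constructor
          · intro h
            by_contra hu
            exact hv ⟨u, by omega⟩
          · intro h; omega
        rw [hset]; exact ih
  exact dic_congr_s5 (fun v _ => by simp) (fun _ _ => rfl) (key f le_rfl)

lemma greedy_exists {r : V → ℕ} {N : V → Finset V} (hN : ∀ v, ∀ w ∈ N v, r v < r w)
    {d s f : ℕ} (hd : ∀ v, (N v).card ≤ d) (B B' : Finset (Fin k)) (hB' : B'.card ≤ s)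
    (hdisj : Disjoint B B') (hk : d + s + 1 ≤ k) (a : V → Fin k) :
    ∃ b : V → Fin k, (∀ v, f ≤ r v → b v = a v) ∧ ∀ v, r v < f →
      (∀ w ∈ N v, b w ≠ b v) ∧ b v ∉ B' ∧ (b v ∉ B → ∀ x ∈ B, ∃ w ∈ N v, b w = x) := by
  have choice : ∀ (v : V) (b : V → Fin k), ∃ c, (∀ w ∈ N v, b w ≠ c) ∧ c ∉ B' ∧
      (c ∉ B → ∀ x ∈ B, ∃ w ∈ N v, b w = x) := by
    intro v b
    by_cases h : ∀ x ∈ B, ∃ w ∈ N v, b w = x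
    · have : ∃ c, c ∉ (N v).image b ∪ B' := by
        by_contra hcon
        push Not at hcon
        have h2 := Finset.card_le_card (fun c _ => hcon c : Finset.univ ⊆ (N v).image b ∪ B')
        have h3 := Finset.card_union_le ((N v).image b) B'
        have h4 := Finset.card_image_le (s := N v) (f := b)
        have h5 := hd v
        rw [Finset.card_univ, Fintype.card_fin] at h2
        omega
      obtain ⟨c, hc⟩ := this
      simp only [Finset.mem_union, not_or, Finset.mem_image, not_exists, not_and] at hc
      exact ⟨c, hc.1, hc.2, fun _ => h⟩
    · push Not at h
      obtain ⟨x, hx, hw⟩ := h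
      exact ⟨x, hw, Finset.disjoint_left.1 hdisj hx, fun h => absurd hx h⟩
  choose ch hch using choice
  have key : ∀ j, ∃ b : V → Fin k, (∀ v, f ≤ r v → b v = a v) ∧ ∀ v, r v < f → f ≤ r v + j →
      (∀ w ∈ N v, b w ≠ b v) ∧ b v ∉ B' ∧ (b v ∉ B → ∀ x ∈ B, ∃ w ∈ N v, b w = x) := by
    intro j
    induction j with
    | zero => exact ⟨a, fun _ _ => rfl, fun v h1 h2 => by omega⟩
    | succ j ih =>
      obtain ⟨b, h1, h2⟩ := ih
      refine ⟨fun u => if r u + (j + 1) = f then ch u b else b u, ?_, ?_⟩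
      · intro v hv
        dsimp only
        rw [if_neg (by omega)]
        exact h1 v hv
      · intro v hv hj
        have hw : ∀ w ∈ N v, (if r w + (j + 1) = f then ch w b else b w) = b w := by
          intro w hw
          rw [if_neg]
          have := hN v w hw
          omega
        have e : (∀ c, (∀ w ∈ N v, (if r w + (j + 1) = f then ch w b else b w) ≠ c) ↔
            ∀ w ∈ N v, b w ≠ c) := by
          intro c
          exact forall₂_congr fun w h => by rw [hw w h]
        have e' : (∀ x, (∃ w ∈ N v, (if r w + (j + 1) = f then ch w b else b w) = x) ↔
            ∃ w ∈ N v, b w = x) := by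
          intro c
          refine exists_congr fun w => and_congr_right fun h => by rw [hw w h]
        simp only [e, e']
        by_cases hvj : r v + (j + 1) = f
        · rw [if_pos hvj]
          exact hch v b
        · rw [if_neg hvj]
          exact h2 v hv (by omega)
  obtain ⟨b, h1, h2⟩ := key f
  exact ⟨b, h1, fun v hv => h2 v hv (by omega)⟩

lemma reach_of_valid {D : V → V → Prop} {T : Set V} {B : Finset (Fin k)} {b : V → Fin k}
    (hb : Dic D Set.univ b) (l : List (V × Fin k)) : ∀ (g : V → Fin k), Valid D T g l →
      (∀ v, v ∈ T ↔ g v ∉ B) → (∀ v, v ∉ T → g v = b v) → (∀ p ∈ l, p.1 ∈ T ∧ p.2 ∉ B) →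
      Reach D k l.length g (run g l) := by
  have hdic : ∀ g : V → Fin k, Dic D T g →
      (∀ v, v ∈ T ↔ g v ∉ B) → (∀ v, v ∉ T → g v = b v) → Dic D Set.univ g := by
    intro g h1 h2 h3
    refine dic_lift (B := B) hb (fun v hv => h3 v (by rw [h2]; exact not_not.2 hv)) ?_
    exact dic_congr_s5 (fun v hv => (h2 v).2 hv) (fun _ _ => rfl) h1
  induction l with
  | nil => intro g h1 h2 h3 h4; exact Reach.refl _ (hdic g h1 h2 h3)
  | cons p l ih =>
    intro g h1 h2 h3 h4
    have hp := h4 p List.mem_cons_self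
    have h2' : ∀ v, v ∈ T ↔ Function.update g p.1 p.2 v ∉ B := by
      intro v
      by_cases hv : v = p.1
      · subst hv; simpa [hp.2] using hp.1
      · rw [Function.update_of_ne hv]; exact h2 v
    have h3' : ∀ v, v ∉ T → Function.update g p.1 p.2 v = b v := by
      intro v hv
      rw [Function.update_of_ne]
      · exact h3 v hv
      · rintro rfl; exact hv hp.1
    have := ih _ h1.2 h2' h3' (fun q hq => h4 q (List.mem_cons_of_mem _ hq))
    have h0 := (Reach.step p.1 p.2 (hdic g h1.1 h2 h3) (hdic _ h1.2.dic h2' h3')).trans this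
    exact h0.mono (by simp; omega)

lemma length_le [Fintype V] {l : List (V × Fin k)} {M : ℕ} (h : ∀ u, cnt u l ≤ M) :
    l.length ≤ M * Fintype.card V := by
  have h1 := ml_length Finset.univ l
  have h2 : (ml Finset.univ l).length = l.length := by simp [ml]
  rw [← h2, h1]
  have := Finset.sum_le_card_nsmul Finset.univ (fun u => cnt u l) M (fun u _ => h u)
  simpa [mul_comm] using this

lemma phase [Fintype V] {D : V → V → Prop} (hD : ∀ v, ¬ D v v) {r : V → ℕ}
    (hr : Function.Injective r) {N : V → Finset V} (hc : Cov D r N) {d s M f : ℕ}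
    (hNd : ∀ v, (N v).card ≤ d) {B : Finset (Fin k)} (hB : B.card = s) (hsM : s + M = d + 1)
    (hk : s + 2 * M ≤ k) {a b : V → Fin k} (ha : Dic D Set.univ a)
    (hav : ∀ v, r v < f → a v ∉ B) (hoff : ∀ v, f ≤ r v → b v = a v)
    (hg : ∀ v, r v < f → (∀ w ∈ N v, b w ≠ b v) ∧ (b v ∉ B → ∀ x ∈ B, ∃ w ∈ N v, b w = x)) :
    Reach D k ((M + 2) * Fintype.card V) a b := by
  have hb : Dic D Set.univ b := greedy_dic hD hr hc ha hoff (fun v hv => (hg v hv).1)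
  let X : Finset V := Finset.univ.filter (fun v => b v ∈ B)
  -- first step
  have step1 : ∀ Y : Finset V, Y ⊆ X → Dic D Set.univ (Y.piecewise b a) ∧
      Reach D k Y.card a (Y.piecewise b a) := by
    have hdic : ∀ Y : Finset V, Y ⊆ X → Dic D Set.univ (Y.piecewise b a) := by
      intro Y hY
      refine dic_lift (B := B) hb ?_ ?_
      · intro v hv
        by_cases hvY : v ∈ Y
        · simp [hvY]
        · simp only [hvY, not_false_eq_true, Finset.piecewise_eq_of_notMem] at hv ⊢
          by_cases hvf : r v < f
          · exact absurd hv (hav v hvf)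
          · exact (hoff v (by omega)).symm
      · refine dic_congr_s5 (Set.subset_univ _) ?_ ha
        intro v hv
        have hvY : v ∉ Y := by
          intro h
          simp only [Set.mem_setOf_eq, h, Finset.piecewise_eq_of_mem] at hv
          exact hv (Finset.mem_filter.1 (hY h)).2
        simp [hvY]
    intro Y
    induction Y using Finset.induction_on with
    | empty => intro _; exact ⟨by simpa using ha, by simpa using Reach.refl _ ha⟩
    | insert v Y hv ih =>
      intro hY
      have hY' := (Finset.insert_subset_iff.1 hY).2
      refine ⟨hdic _ hY, ?_⟩
      have h2 := hdic _ hY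
      rw [Finset.piecewise_insert] at h2 ⊢
      rw [Finset.card_insert_of_notMem hv]
      exact (ih hY').2.trans (Reach.step _ _ (hdic Y hY') h2)
  obtain ⟨hd1, hreach1⟩ := step1 X le_rfl
  set a1 := X.piecewise b a with ha1
  have hT : ∀ v, b v ∉ B ↔ a1 v ∉ B := by
    intro v
    by_cases hv : b v ∈ B
    · have : v ∈ X := by simp [X, hv]
      simp [ha1, this]
    · have : v ∉ X := by simp [X, hv]
      simp only [hv, not_false_eq_true, ha1, this, Finset.piecewise_eq_of_notMem, true_iff]
      by_cases hvf : r v < f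
      · exact hav v hvf
      · rw [← hoff v (by omega)]; exact hv
  have hoffT : ∀ v, f ≤ r v → a1 v = b v := by
    intro v hv
    by_cases hvX : v ∈ X
    · simp [ha1, hvX]
    · simp [ha1, hvX, hoff v hv]
  have hnT : ∀ v, b v ∈ B → a1 v = b v := by
    intro v hv
    have : v ∈ X := by simp [X, hv]
    simp [ha1, this]
  -- second step
  have key : ∀ j ≤ f, ∃ l : List (V × Fin k), Valid D {v | b v ∉ B ∧ f ≤ r v + j} a1 l ∧
      (∀ p ∈ l, p.1 ∈ {v | b v ∉ B ∧ f ≤ r v + j} ∧ p.2 ∉ B) ∧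
      (∀ v ∈ {v | b v ∉ B ∧ f ≤ r v + j}, run a1 l v = b v) ∧ ∀ u, cnt u l ≤ M + 1 := by
    intro j
    induction j with
    | zero =>
      intro _
      refine ⟨[], dic_congr_s5 (Set.subset_univ _) (fun _ _ => rfl) hd1, by simp, ?_, by simp [cnt]⟩
      intro v hv
      exact hoffT v (by simpa using hv.2)
    | succ j ih =>
      intro hj
      obtain ⟨l, l1, l2, l3, l4⟩ := ih (by omega)
      by_cases hv : ∃ v, r v + (j + 1) = f ∧ b v ∉ B
      · obtain ⟨v, hv, hvB⟩ := hv
        have hset : {v | b v ∉ B ∧ f ≤ r v + (j + 1)} =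
            insert v {v | b v ∉ B ∧ f ≤ r v + j} := by
          ext u
          simp only [Set.mem_setOf_eq, Set.mem_insert_iff]
          constructor
          · rintro ⟨h0, h⟩
            by_cases hu : f ≤ r u + j
            · exact Or.inr ⟨h0, hu⟩
            · exact Or.inl (hr (by omega))
          · rintro (rfl | h)
            · exact ⟨hvB, by omega⟩
            · exact ⟨h.1, by omega⟩
        rw [hset]
        have hvT : v ∉ {v | b v ∉ B ∧ f ≤ r v + j} := by
          simp only [Set.mem_setOf_eq, not_and]
          intro _; omega
        have hcard : ((N v).filter (fun w => b w ∉ B)).card + 1 ≤ M := by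
          have h1 : B ⊆ ((N v).filter (fun w => b w ∈ B)).image b := by
            intro x hx
            obtain ⟨w, hw, hwx⟩ := (hg v (by omega)).2 hvB x hx
            exact Finset.mem_image.2 ⟨w, by simp [hw, hwx, hx], hwx⟩
          have h2 := Finset.card_le_card h1
          have h3 := Finset.card_image_le (s := (N v).filter (fun w => b w ∈ B)) (f := b)
          have h4 := Finset.card_filter_add_card_filter_not (s := N v) (fun w => b w ∈ B)
          have h5 := hNd v
          omega
        obtain ⟨l', e1, e2, e3, e4⟩ := ext_vertex hD hvT
          (N := (N v).filter (fun w => b w ∉ B)) (by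
            intro w hw
            simp only [Finset.mem_filter] at hw
            have := (hc v).1 w hw.1
            exact ⟨hw.2, by omega⟩)
          (by
            refine (hc v).2.imp ?_ ?_ <;>
            · intro h w hw h'
              simp only [Set.mem_setOf_eq] at hw
              exact Finset.mem_filter.2 ⟨h w (by omega) h', hw.1⟩)
          hB.le hcard hk l a1 b (dic_congr_s5 (Set.subset_univ _) (fun _ _ => rfl) hd1)
          (dic_congr_s5 (Set.subset_univ _) (fun _ _ => rfl) hb) hvB l1 (fun p hp => (l2 p hp).1) l3 l4
        refine ⟨l', e1, ?_, e3, e4⟩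
        intro p hp
        rcases e2 p hp with h | h
        · exact ⟨Or.inr (l2 p h).1, (l2 p h).2⟩
        · exact ⟨Or.inl h.1, h.2⟩
      · have hset : {v | b v ∉ B ∧ f ≤ r v + (j + 1)} = {v | b v ∉ B ∧ f ≤ r v + j} := by
          ext u
          simp only [Set.mem_setOf_eq]
          constructor
          · rintro ⟨h0, h⟩
            by_contra hu
            exact hv ⟨u, by by_contra h'; exact hu ⟨h0, by omega⟩, h0⟩
          · rintro ⟨h0, h⟩; exact ⟨h0, by omega⟩
        rw [hset]
        exact ⟨l, l1, l2, l3, l4⟩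
  obtain ⟨l, l1, l2, l3, l4⟩ := key f le_rfl
  have hset : {v | b v ∉ B ∧ f ≤ r v + f} = {v | b v ∉ B} := by
    ext u; simp
  rw [hset] at l1 l2 l3
  have hreach2 := reach_of_valid hb l a1 l1 hT (fun v hv => hnT v (by simpa using hv)) l2
  have hfin : run a1 l = b := by
    funext v
    by_cases hv : b v ∈ B
    · rw [run_of_not_mem, hnT v hv]
      rintro p hp rfl
      exact (l2 p hp).1 hv
    · exact l3 v hv
  rw [hfin] at hreach2
  refine (hreach1.trans hreach2).mono ?_
  have h1 := length_le l4
  have h2 : X.card ≤ Fintype.card V := Finset.card_le_univ X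
  nlinarith

lemma Reach.dic {D : V → V → Prop} {a b : V → Fin k} {m : ℕ} (h : Reach D k m a b) :
    Dic D Set.univ b := by
  obtain ⟨j, γ, h1, h2, h3, h4⟩ := h
  exact isDic_iff.1 (h2 ▸ h3.1 j le_rfl)

/-- phase avoiding `B'` -/
lemma phase' [Fintype V] {D : V → V → Prop} (hD : ∀ v, ¬ D v v) {r : V → ℕ}
    (hr : Function.Injective r) {N : V → Finset V} (hc : Cov D r N) {d s M : ℕ} (f : ℕ)
    (hNd : ∀ v, (N v).card ≤ d) {B B' : Finset (Fin k)} (hB : B.card = s) (hB' : B'.card = s)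
    (hdisj : Disjoint B B') (hsM : s + M = d + 1)
    (hk : s + 2 * M ≤ k) (hk' : 2 * s + M ≤ k) {a : V → Fin k} (ha : Dic D Set.univ a)
    (hav : ∀ v, r v < f → a v ∉ B) :
    ∃ b, Reach D k ((M + 2) * Fintype.card V) a b ∧ (∀ v, f ≤ r v → b v = a v) ∧
      ∀ v, r v < f → b v ∉ B' := by
  obtain ⟨b, h1, h2⟩ := greedy_exists (fun v => (hc v).1) (f := f) hNd B B' hB'.le hdisj (by omega) a
  exact ⟨b, phase hD hr hc hNd hB hsM hk ha hav h1 (fun v hv => ⟨(h2 v hv).1, (h2 v hv).2.2⟩), h1,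
    fun v hv => (h2 v hv).2.1⟩

lemma exists_disj {s m : ℕ} (A : Finset (Fin k)) (hA : A.card ≤ m) (hk : m + s ≤ k) :
    ∃ B : Finset (Fin k), B.card = s ∧ Disjoint A B := by
  have : s ≤ (Aᶜ).card := by
    rw [Finset.card_compl, Fintype.card_fin]; omega
  obtain ⟨B, h1, h2⟩ := Finset.exists_subset_card_eq this
  refine ⟨B, h2, ?_⟩
  rw [Finset.disjoint_left]
  intro x hx hxB
  exact Finset.mem_compl.1 (h1 hxB) hx

lemma blocks [Fintype V] {D : V → V → Prop} (hD : ∀ v, ¬ D v v) {r : V → ℕ}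
    (hr : Function.Injective r) {N : V → Finset V} (hc : Cov D r N) {d s M : ℕ}
    (hNd : ∀ v, (N v).card ≤ d) (hsM : s + M = d + 1)
    (hk : s + 2 * M ≤ k) (hk' : 2 * s + M ≤ k) {a : V → Fin k} (ha : Dic D Set.univ a) (t : ℕ) :
    ∃ b B, Finset.card B = s ∧ Reach D k (t * ((M + 2) * Fintype.card V)) a b ∧
      (∀ v, t * M ≤ r v → b v = a v) ∧ ∀ v, r v < t * M → b v ∉ B := by
  induction t with
  | zero =>
    obtain ⟨B, hB, -⟩ := exists_disj (k := k) (s := s) (m := 0) ∅ (by simp) (by omega)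
    exact ⟨a, B, hB, Reach.refl _ ha, fun _ _ => rfl, fun v hv => by simp at hv⟩
  | succ t ih =>
    obtain ⟨b, B, hB, h1, h2, h3⟩ := ih
    let A : Finset (Fin k) := B ∪
      (Finset.univ.filter (fun v => r v ∈ Finset.Ico (t * M) ((t + 1) * M))).image a
    have hA : A.card ≤ s + M := by
      refine (Finset.card_union_le _ _).trans ?_
      rw [hB]
      refine Nat.add_le_add_left ?_ _
      refine Finset.card_image_le.trans ?_
      have := Finset.card_le_card_of_injOn (s := Finset.univ.filter
        (fun v => r v ∈ Finset.Ico (t * M) ((t + 1) * M)))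
        (t := Finset.Ico (t * M) ((t + 1) * M)) r
        (by intro v hv; simpa using hv) hr.injOn
      refine this.trans ?_
      rw [Nat.card_Ico, Nat.add_mul]
      omega
    obtain ⟨B', hB', hdisj⟩ := exists_disj (s := s) A hA (by omega)
    obtain ⟨b', e1, e2, e3⟩ := phase' hD hr hc (t * M) hNd hB hB'
      (Finset.disjoint_of_subset_left Finset.subset_union_left hdisj) hsM hk hk' h1.dic h3
    have hle : t * M ≤ (t + 1) * M := Nat.mul_le_mul_right _ (by omega)
    refine ⟨b', B', hB', ?_, ?_, ?_⟩
    · have := h1.trans e1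
      exact this.mono (le_of_eq (by ring))
    · intro v hv
      rw [e2 v (by omega), h2 v (by omega)]
    · intro v hv
      by_cases hv' : r v < t * M
      · exact e3 v hv'
      · rw [e2 v (by omega), h2 v (by omega)]
        refine Finset.disjoint_left.1 hdisj ?_
        refine Finset.mem_union_right _ (Finset.mem_image_of_mem _ ?_)
        simp only [Finset.mem_filter, Finset.mem_univ, true_and, Finset.mem_Ico]
        omega

lemma order_exists {V : Type} [Fintype V] [DecidableEq V] {D : V → V → Prop} {d : ℕ}
    (h : ∀ S : Set V, S.Nonempty → ∃ v ∈ S, min (outDegOn D S v) (inDegOn D S v) ≤ d) :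
    ∃ (r : V → ℕ) (N : V → Finset V), Function.Injective r ∧ (∀ v, r v < Fintype.card V) ∧
      Cov D r N ∧ ∀ v, (N v).card ≤ d := by
  classical
  have key : ∀ m, ∀ S : Finset V, S.card = m → ∃ r : V → ℕ, Set.InjOn r S ∧
      (∀ v ∈ S, r v < m) ∧ ∀ v ∈ S,
      (S.filter (fun w => r v < r w ∧ D v w)).card ≤ d ∨
      (S.filter (fun w => r v < r w ∧ D w v)).card ≤ d := by
    intro m
    induction m with
    | zero =>
      intro S hS
      rw [Finset.card_eq_zero] at hS
      subst hS
      exact ⟨fun _ => 0, by simp, by simp, by simp⟩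
    | succ m ih =>
      intro S hS
      have hne : (S : Set V).Nonempty := by
        rw [Finset.coe_nonempty, ← Finset.card_pos]; omega
      obtain ⟨v, hv, hmin⟩ := h S hne
      have hv : v ∈ S := hv
      obtain ⟨r, h1, h2, h3⟩ := ih (S.erase v) (by rw [Finset.card_erase_of_mem hv]; omega)
      have hf : ∀ u w, u ≠ v → ((if u = v then 0 else r u + 1) < (if w = v then 0 else r w + 1) ↔
          w ≠ v ∧ r u < r w) := by
        intro u w hu
        by_cases hw : w = v <;> simp [hu, hw]
      refine ⟨fun u => if u = v then 0 else r u + 1, ?_, ?_, ?_⟩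
      · intro x hx y hy hxy
        by_cases hxv : x = v <;> by_cases hyv : y = v <;> simp [hxv, hyv] at hxy
        · rw [hxv, hyv]
        · exact h1 (by simpa [hxv] using hx) (by simpa [hyv] using hy) hxy
      · intro u hu
        by_cases huv : u = v
        · simp [huv]
        · have := h2 u (by simp [huv, hu])
          simp [huv, this]
      · intro u hu
        by_cases huv : u = v
        · subst huv
          rcases min_le_iff.1 hmin with hm | hm
          · left
            refine le_trans ?_ hm
            rw [outDegOn, ← Set.ncard_coe_finset]
            refine Set.ncard_le_ncard ?_ (Set.toFinite _)
            intro w hw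
            simp only [Finset.coe_filter, Set.mem_setOf_eq] at hw
            exact ⟨hw.1, hw.2.2⟩
          · right
            refine le_trans ?_ hm
            rw [inDegOn, ← Set.ncard_coe_finset]
            refine Set.ncard_le_ncard ?_ (Set.toFinite _)
            intro w hw
            simp only [Finset.coe_filter, Set.mem_setOf_eq] at hw
            exact ⟨hw.1, hw.2.2⟩
        · refine (h3 u (by simp [huv, hu])).imp ?_ ?_ <;>
          · intro hle
            refine le_trans (Finset.card_le_card ?_) hle
            intro w hw
            simp only [Finset.mem_filter, hf u w huv] at hw
            simp only [Finset.mem_filter, Finset.mem_erase]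
            tauto
  obtain ⟨r, h1, h2, h3⟩ := key _ Finset.univ Finset.card_univ
  refine ⟨r, fun v => if (Finset.univ.filter (fun w => r v < r w ∧ D v w)).card ≤ d then
    Finset.univ.filter (fun w => r v < r w ∧ D v w) else
    Finset.univ.filter (fun w => r v < r w ∧ D w v), ?_, fun v => h2 v (Finset.mem_univ v), ?_, ?_⟩
  · intro x y hxy
    exact h1 (by simp) (by simp) hxy
  · intro v
    dsimp only
    split_ifs with hle
    · exact ⟨fun w hw => (Finset.mem_filter.1 hw).2.1, Or.inl fun w h h' => by simp [h, h']⟩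
    · exact ⟨fun w hw => (Finset.mem_filter.1 hw).2.1, Or.inr fun w h h' => by simp [h, h']⟩
  · intro v
    dsimp only
    split_ifs with hle
    · exact hle
    · exact (h3 v (Finset.mem_univ v)).resolve_left hle

/-- everything reaches a colouring avoiding a fixed set -/
lemma to_fixed [Fintype V] {D : V → V → Prop} (hD : ∀ v, ¬ D v v) {r : V → ℕ}
    (hr : Function.Injective r) (hrn : ∀ v, r v < Fintype.card V)
    {N : V → Finset V} (hc : Cov D r N) {d s M : ℕ}
    (hNd : ∀ v, (N v).card ≤ d) (hsM : s + M = d + 1)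
    (hk : s + 2 * M ≤ k) (hk' : 2 * s + M ≤ k) (hsM' : s ≤ M) (hM : 1 ≤ M)
    (hMn : M ≤ Fintype.card V) {B0 : Finset (Fin k)}
    (hB0 : B0.card = s) {a : V → Fin k} (ha : Dic D Set.univ a) :
    ∃ b, Reach D k (12 * Fintype.card V ^ 2) a b ∧ ∀ v, b v ∉ B0 := by
  set n := Fintype.card V with hn
  obtain ⟨b, B, hB, h1, -, h3⟩ := blocks hD hr hc hNd hsM hk hk' ha (n / M + 1)
  have hlt : n < (n / M + 1) * M := by
    have := Nat.lt_div_mul_add (a := n) (b := M) (by omega)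
    rw [Nat.add_mul]; omega
  obtain ⟨B', hB', hdisj⟩ := exists_disj (s := s) (m := s + s) (B ∪ B0)
    ((Finset.card_union_le _ _).trans (by omega)) (by omega)
  obtain ⟨b', e1, -, e3⟩ := phase' hD hr hc n hNd hB hB'
      (Finset.disjoint_of_subset_left Finset.subset_union_left hdisj) hsM hk hk' h1.dic
      (fun v hv => h3 v (by omega))
  obtain ⟨b'', f1, -, f3⟩ := phase' hD hr hc n hNd hB' hB0
      (Finset.disjoint_of_subset_left Finset.subset_union_right hdisj).symm hsM hk hk' e1.dic
      (fun v hv => e3 v hv)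
  refine ⟨b'', ((h1.trans e1).trans f1).mono ?_, fun v => f3 v (hrn v)⟩
  have g1 : n / M * M ≤ n := Nat.div_mul_le_self n M
  have g2 : (M + 2) * n ≤ 3 * M * n := Nat.mul_le_mul_right _ (by omega)
  have g3 : (n / M + 1) * ((M + 2) * n) ≤ (n / M + 1) * (3 * M * n) := Nat.mul_le_mul_left _ g2
  have g4 : (n / M + 1) * (3 * M * n) = 3 * (n / M * M) * n + 3 * M * n := by ring
  have g5 : 3 * (n / M * M) * n ≤ 3 * n * n := Nat.mul_le_mul_right _ (by omega)
  have g6 : 3 * M * n ≤ 3 * n * n := Nat.mul_le_mul_right _ (by omega)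
  have g7 : 12 * n ^ 2 = 4 * (3 * n * n) := by ring
  rw [← hn]
  omega

lemma main_bound [Fintype V] [Nonempty V] {D : V → V → Prop} (hD : ∀ v, ¬ D v v) {d : ℕ}
    (h : ∀ S : Set V, S.Nonempty → ∃ v ∈ S, min (outDegOn D S v) (inDegOn D S v) ≤ d)
    (hdn : d < Fintype.card V) (hk : 3 * (d + 1) ≤ 2 * k) {a b : V → Fin k}
    (ha : Dic D Set.univ a) (hb : Dic D Set.univ b) :
    Reach D k (30 * Fintype.card V ^ 2) a b := by
  obtain ⟨r, N, hr, hrn, hc, hNd⟩ := order_exists h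
  obtain ⟨s, hs⟩ : ∃ s, s = (d + 1) / 2 := ⟨_, rfl⟩
  obtain ⟨M, hM⟩ : ∃ M, M = d + 1 - s := ⟨_, rfl⟩
  have hsM : s + M = d + 1 := by omega
  have hk1 : s + 2 * M ≤ k := by omega
  have hk2 : 2 * s + M ≤ k := by omega
  obtain ⟨B0, hB0, -⟩ := exists_disj (k := k) (s := s) (m := 0) ∅ (by simp) (by omega)
  obtain ⟨a', ha', ha0⟩ := to_fixed hD hr hrn hc hNd hsM hk1 hk2 (by omega) (by omega) (by omega)
    hB0 ha
  obtain ⟨b', hb', hb0⟩ := to_fixed hD hr hrn hc hNd hsM hk1 hk2 (by omega) (by omega) (by omega)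
    hB0 hb
  obtain ⟨c, c1, c2⟩ := greedy_exists (fun v => (hc v).1) (f := Fintype.card V) (s := 0)
    hNd B0 ∅ (by simp) (by simp) (by omega) a'
  have p1 := phase hD hr hc hNd hB0 hsM hk1 ha'.dic (fun v _ => ha0 v) c1
    (fun v hv => ⟨(c2 v hv).1, (c2 v hv).2.2⟩)
  have p2 := phase hD hr hc hNd hB0 hsM hk1 (f := Fintype.card V) (b := c) hb'.dic
    (fun v _ => hb0 v) (fun v hv => absurd (hrn v) (by omega))
    (fun v hv => ⟨(c2 v hv).1, (c2 v hv).2.2⟩)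
  refine ((ha'.trans p1).trans (p2.symm.trans hb'.symm)).mono ?_
  have g2 : (M + 2) * Fintype.card V ≤ (3 * Fintype.card V) * Fintype.card V :=
    Nat.mul_le_mul_right _ (by omega)
  nlinarith

end Helpers

/-- There is a universal constant `C` such that for every digraph `D` on `n`
vertices and every `k ≥ (3/2)(δ*_min(D) + 1)`, the `k`-dicolouring graph of `D`
has diameter at most `C n²`. -/
theorem quadratic_diameter :
    ∃ C : ℕ, ∀ (n : ℕ) (D : Fin n → Fin n → Prop), Irreflexive D →
      ∀ d k : ℕ,
        (∀ S : Set (Fin n), S.Nonempty →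
          ∃ v ∈ S, min (outDegOn D S v) (inDegOn D S v) ≤ d) →
        3 * (d + 1) ≤ 2 * k →
        ∀ α β : Fin n → Fin k, IsDicolouring D k α → IsDicolouring D k β →
          ∃ (m : ℕ) (γ : ℕ → Fin n → Fin k),
            γ 0 = α ∧ γ m = β ∧ RecolWalk D k m γ ∧ m ≤ C * n ^ 2 := by
  refine ⟨30, ?_⟩
  intro n D hD d k h hk α β hα hβ
  rcases Nat.eq_zero_or_pos n with rfl | hn
  · refine ⟨0, fun _ => α, rfl, ?_, ⟨fun _ _ => hα, fun i hi => by omega⟩, by omega⟩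
    funext v
    exact v.elim0
  have : Nonempty (Fin n) := ⟨⟨0, hn⟩⟩
  have hmain := main_bound (k := k) (D := D) (d := min d (n - 1)) (fun v hv => hD v hv) ?_
    (by rw [Fintype.card_fin]; omega) (by omega) (isDic_iff.1 hα) (isDic_iff.1 hβ)
  · rw [Fintype.card_fin] at hmain
    exact hmain
  · intro S hS
    obtain ⟨v, hv, hle⟩ := h S hS
    refine ⟨v, hv, le_min hle ((min_le_left _ _).trans ?_)⟩
    have h1 : outDegOn D S v ≤ ({v}ᶜ : Set (Fin n)).ncard := by
      refine Set.ncard_le_ncard ?_ (Set.toFinite _)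
      rintro w ⟨-, hw⟩ hwv
      rw [Set.mem_singleton_iff] at hwv
      subst hwv
      exact hD _ hw
    have h2 := Set.ncard_add_ncard_compl ({v} : Set (Fin n))
    rw [Set.ncard_singleton, Nat.card_eq_fintype_card, Fintype.card_fin] at h2
    omega
end

section
/- Let G⃗ be a subcubic oriented graph on n vertices (every vertex has total degree d⁺ + d⁻ at most 3). Then for any two 2-dicolourings α and β of G⃗ there is a redicolouring sequence from α to β of length at most 2·|{v : α(v) ≠ β(v)}|. In particular, the 2-dicolouring graph D_2(G⃗) is connected and has diameter at most 2n. -/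
open Relation in
theorem aux_lift {V : Type} {D : V → V → Prop} {k : ℕ} {α γ : V → Fin k} (c : Fin k)
    (h : ∀ x, α x ≠ γ x → ¬ TransGen (fun u v => D u v ∧ γ u = c ∧ γ v = c) x x) (x y : V)
    (hxy : TransGen (fun u v => D u v ∧ γ u = c ∧ γ v = c) x y) :
    TransGen (fun u v => D u v ∧ γ u = c ∧ γ v = c) y x →
      TransGen (fun u v => D u v ∧ α u = c ∧ α v = c) x y := by
  induction hxy with
  | single e =>
    intro hyx
    have h1 := not_imp_not.mpr (h x) (not_not.mpr (hyx.head e))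
    have h2 := not_imp_not.mpr (h _) (not_not.mpr (hyx.tail e))
    push Not at h1 h2
    exact TransGen.single ⟨e.1, h1.trans e.2.1, h2.trans e.2.2⟩
  | tail p e ih =>
    intro hyx
    have hb := TransGen.head (r := fun u v => D u v ∧ γ u = c ∧ γ v = c) e hyx
    have h1 := not_imp_not.mpr (h _) (not_not.mpr (hb.trans p))
    have h2 := not_imp_not.mpr (h _) (not_not.mpr (hyx.trans (p.tail e)))
    push Not at h1 h2
    exact (ih hb).tail ⟨e.1, h1.trans e.2.1, h2.trans e.2.2⟩

open Relation in
theorem aux_dicol {V : Type} {D : V → V → Prop} {k : ℕ} {α γ : V → Fin k}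
    (hα : IsDicolouring D k α)
    (h : ∀ x c, α x ≠ γ x → ¬ TransGen (fun u v => D u v ∧ γ u = c ∧ γ v = c) x x) :
    IsDicolouring D k γ := by
  intro c x hx
  exact hα c x (aux_lift c (fun y hy => h y c hy) x x hx hx)

open Relation in
/-- first three and last vertices around a closed walk -/
theorem aux_cycle {V : Type} {R : V → V → Prop} (_hirr : ∀ x y, R x y → ¬ R y x) {v : V}
    (h : TransGen R v v) :
    ∃ u w q p, R v u ∧ R u w ∧ R w q ∧ R p v := by
  have succ : ∀ x, TransGen R x x → ∃ y, R x y ∧ TransGen R y y := by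
    intro x hx
    obtain ⟨y, hy, hyx⟩ := TransGen.head'_iff.mp hx
    exact ⟨y, hy, TransGen.tail' hyx hy⟩
  obtain ⟨u, hu, hu'⟩ := succ v h
  obtain ⟨w, hw, hw'⟩ := succ u hu'
  obtain ⟨q, hq, _⟩ := succ w hw'
  obtain ⟨p, _, hp⟩ := TransGen.tail'_iff.mp h
  exact ⟨u, w, q, p, hu, hw, hq, hp⟩

open Relation in
theorem aux_frozen {V : Type} [DecidableEq V] {D : V → V → Prop} (hD : Oriented D) {k : ℕ}
    {α : V → Fin k} {v : V} {c : Fin k}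
    (hα : IsDicolouring D k α) (h : ¬ IsDicolouring D k (Function.update α v c)) :
    ∃ u w q p, D v u ∧ D u w ∧ D w q ∧ D p v ∧ α u = c ∧ α w = c ∧ (q ≠ v → α q = c) ∧ α p = c := by
  by_contra hcon
  apply h
  apply aux_dicol hα
  intro x d hx hcyc
  have hxv : x = v := by
    by_contra hne
    exact hx (by simp [Function.update_of_ne hne])
  subst hxv
  obtain ⟨u, w, q, p, h1, h2, h3, h4⟩ := aux_cycle (fun a b hab hba => hD a b hab.1 hba.1) hcyc
  have hd : c = d := by simpa using h1.2.1
  subst hd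
  have n1 : u ≠ x := fun e => hD _ _ h1.1 (by rw [e] at h1 ⊢; exact h1.1)
  have n2 : w ≠ x := fun e => hD _ _ h1.1 (by rw [← e]; rw [← e] at h2; exact h2.1)
  have n3 : p ≠ x := fun e => hD _ _ h4.1 (by rw [e] at h4 ⊢; exact h4.1)
  refine hcon ⟨u, w, q, p, h1.1, h2.1, h3.1, h4.1, ?_, ?_, ?_, ?_⟩
  · simpa [Function.update_of_ne n1] using h1.2.2
  · simpa [Function.update_of_ne n2] using h2.2.2
  · intro n; simpa [Function.update_of_ne n] using h3.2.2
  · simpa [Function.update_of_ne n3] using h4.2.1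

theorem aux_adj {V : Type} [DecidableEq V] {k : ℕ} (α : V → Fin k) (v : V) (c : Fin k)
    (h : α v ≠ c) : RecolAdj α (Function.update α v c) :=
  ⟨v, by simpa using h, fun w hw => by simp [Function.update_of_ne hw]⟩

def AuxU {V : Type} (D : V → V → Prop) (v : V) : Prop := ∀ a b, D v a → D v b → a = b

theorem aux_core {V : Type} [DecidableEq V] (D : V → V → Prop) (hD : Oriented D)
    (hdeg : ∀ v, AuxU D v ∨ AuxU (fun x y => D y x) v)
    (hdeg3 : ∀ u v w w' a, D v u → D u w → D u w' → D u a → w ≠ w' → a ≠ w → a ≠ w' → False)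
    (α β : V → Fin 2) (hα : IsDicolouring D 2 α) (hβ : IsDicolouring D 2 β)
    (fα : ∀ v, α v ≠ β v → ¬ IsDicolouring D 2 (Function.update α v (β v)))
    (fβ : ∀ v, α v ≠ β v → ¬ IsDicolouring D 2 (Function.update β v (α v)))
    (v : V) (hv : α v ≠ β v) (hU : AuxU D v) :
    ∃ (u : V) (a1 a2 a3 a4 : V → Fin 2), u ≠ v ∧ α u ≠ β u ∧
      IsDicolouring D 2 a1 ∧ IsDicolouring D 2 a2 ∧ IsDicolouring D 2 a3 ∧ IsDicolouring D 2 a4 ∧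
      RecolAdj α a1 ∧ RecolAdj a1 a2 ∧ RecolAdj a2 a3 ∧ RecolAdj a3 a4 ∧
      a4 = Function.update (Function.update α v (β v)) u (β u) := by
  have irr : ∀ x y, D x y → x ≠ y := fun x y h e => by subst e; exact hD _ _ h h
  obtain ⟨u, w, q, p, hvu, huw, hwq, -, cu, cw, cq, -⟩ := aux_frozen hD hα (fα v hv)
  obtain ⟨u', _, _, _, hvu', -, -, -, cu', -, -, -⟩ := aux_frozen hD hβ (fβ v hv)
  obtain rfl := hU _ _ hvu hvu'
  have hu : α u ≠ β u := by rw [cu, cu']; exact hv.symm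
  obtain ⟨w', _, _, _, huw', -, -, -, cw', -, -, -⟩ := aux_frozen hD hα (fα u hu)
  rw [cu'] at cw'
  have nw : w ≠ w' := fun e => hv (by rw [← cw', ← cw, e])
  have hin : ∀ a, D a u → a = v := by
    rcases hdeg u with h | h
    · exact absurd (h _ _ huw huw') nw
    · intro a ha; exact h _ _ ha hvu
  have hout : ∀ a, D v a → a = u := fun a ha => hU _ _ ha hvu
  have nuv : u ≠ v := (irr _ _ hvu).symm
  have nwu : w ≠ u := (irr _ _ huw).symm
  have nwv : w ≠ v := fun e => hD _ _ hvu (e ▸ huw)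
  have nwu' : w' ≠ u := (irr _ _ huw').symm
  have nwv' : w' ≠ v := fun e => hD _ _ hvu (e ▸ huw')
  have huout : ∀ a, D u a → a = w ∨ a = w' := fun a ha => by
    by_contra hne
    push Not at hne
    exact hdeg3 u v w w' a hvu huw huw' ha nw hne.1 hne.2
  have asym : ∀ (γ : V → Fin 2) (c : Fin 2) (a b : V), (D a b ∧ γ a = c ∧ γ b = c) →
    ¬ (D b a ∧ γ b = c ∧ γ a = c) := fun γ c a b h h' => hD _ _ h.1 h'.1
  set a1 := Function.update α w (α v) with e1
  set a2 := Function.update a1 v (β v) with e2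
  set a3 := Function.update a2 u (β u) with e3
  set a4 := Function.update a3 w (α w) with e4
  have d1 : IsDicolouring D 2 a1 := by
    by_contra hcon
    obtain ⟨s, t, _, r, hws, hst, -, hrw, cs, ct, -, cr⟩ := aux_frozen hD hα hcon
    have nur : u ≠ r := by rintro rfl; exact hv (by rw [← cu, ← cr])
    have hq : q = s := by
      rcases hdeg w with h | h
      · exact h _ _ hwq hws
      · exact absurd (h _ _ huw hrw) nur
    subst hq
    have hqv : q = v := by
      by_contra hne
      exact hv (by rw [← cs, cq hne])
    subst hqv
    rw [hout _ hst, cu] at ct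
    exact hv ct.symm
  have d2 : IsDicolouring D 2 a2 := by
    by_contra hcon
    obtain ⟨s, t, _, r, hvs, hst, -, -, cs, ct, -, -⟩ := aux_frozen hD d1 hcon
    obtain rfl := hout _ hvs
    rcases huout _ hst with rfl | rfl
    · exact hv (by simpa [e1] using ct)
    · rw [e1, Function.update_of_ne nw.symm, cw'] at ct; exact hv ct
  have d3 : IsDicolouring D 2 a3 := by
    by_contra hcon
    obtain ⟨s, t, _, r, -, -, -, hru, -, -, -, cr⟩ := aux_frozen hD d2 hcon
    obtain rfl := hin _ hru
    rw [cu', e2, Function.update_self] at cr; exact hv cr.symm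
  have e5 : a4 = Function.update (Function.update α v (β v)) u (β u) := by
    funext x
    by_cases xw : x = w
    · rw [xw, e4, Function.update_self, Function.update_of_ne nwu, Function.update_of_ne nwv]
    · rw [e4, Function.update_of_ne xw, e3]
      by_cases xu : x = u
      · rw [xu, Function.update_self, Function.update_self]
      · rw [Function.update_of_ne xu, Function.update_of_ne xu, e2]
        by_cases xv : x = v
        · rw [xv, Function.update_self, Function.update_self]
        · rw [Function.update_of_ne xv, Function.update_of_ne xv, e1, Function.update_of_ne xw]
  have d4 : IsDicolouring D 2 a4 := by
    apply aux_dicol hα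
    have hvc : a4 v = β v := by rw [e5]; simp [Function.update_of_ne nuv.symm]
    have huc : a4 u = α v := by rw [e5]; simp [cu']
    intro x c hx hcyc
    obtain ⟨s, _, _, r, hs, -, -, hr⟩ := aux_cycle (asym a4 c) hcyc
    by_cases hxu : x = u
    · subst hxu
      have := hin _ hr.1
      subst this
      exact hv (by rw [← huc, ← hvc, hr.2.1, hr.2.2])
    · by_cases hxv : x = v
      · subst hxv
        have := hout _ hs.1
        subst this
        exact hv (by rw [← huc, ← hvc, hs.2.1, hs.2.2])
      · exact hx (by rw [e5, Function.update_of_ne hxu, Function.update_of_ne hxv])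
  refine ⟨u, a1, a2, a3, a4, nuv, hu, d1, d2, d3, d4, aux_adj _ _ _ ?_, aux_adj _ _ _ ?_,
    aux_adj _ _ _ ?_, aux_adj _ _ _ ?_, e5⟩
  · rw [cw]; exact hv.symm
  · rw [e1, Function.update_of_ne nwv.symm]; exact hv
  · rw [e2, Function.update_of_ne nuv, e1, Function.update_of_ne nwu.symm]; exact hu
  · rw [e3, Function.update_of_ne nwu, e2, Function.update_of_ne nwv, e1, Function.update_self, cw]
    exact hv

theorem aux_flip {V : Type} (D : V → V → Prop) (k : ℕ) (α : V → Fin k) :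
    IsDicolouring (fun x y => D y x) k α ↔ IsDicolouring D k α := by
  have key : ∀ (D : V → V → Prop), IsDicolouring D k α → IsDicolouring (fun x y => D y x) k α := by
    intro D h c x hx
    apply h c x
    rw [← Relation.transGen_swap] at hx
    refine Relation.TransGen.mono ?_ _ _ hx
    rintro a b ⟨h1, h2, h3⟩
    exact ⟨h1, h3, h2⟩
  exact ⟨key _, key D⟩

def AuxGood {V : Type} (D : V → V → Prop) (n : ℕ) (α β : V → Fin 2) : Prop :=
  ∃ (m : ℕ) (γ : ℕ → V → Fin 2), γ 0 = α ∧ γ m = β ∧ RecolWalk D 2 m γ ∧ m ≤ n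

theorem AuxGood.cons {V : Type} {D : V → V → Prop} {n : ℕ} {α α' β : V → Fin 2}
    (hα : IsDicolouring D 2 α) (h : RecolAdj α α') (g : AuxGood D n α' β) :
    AuxGood D (n + 1) α β := by
  obtain ⟨m, γ, h0, h1, ⟨h2, h3⟩, h4⟩ := g
  refine ⟨m + 1, fun i => Nat.casesOn i α γ, rfl, h1, ⟨?_, ?_⟩, by omega⟩
  · intro i hi
    cases i with
    | zero => exact hα
    | succ i => exact h2 i (by omega)
  · intro i hi
    cases i with
    | zero => simpa [h0] using h
    | succ i => exact h3 i (by omega)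

theorem AuxGood.snoc {V : Type} {D : V → V → Prop} {n : ℕ} {α β' β : V → Fin 2}
    (hβ : IsDicolouring D 2 β) (h : RecolAdj β' β) (g : AuxGood D n α β') :
    AuxGood D (n + 1) α β := by
  obtain ⟨m, γ, h0, h1, ⟨h2, h3⟩, h4⟩ := g
  refine ⟨m + 1, fun i => if i ≤ m then γ i else β, by simpa using h0, by simp, ⟨?_, ?_⟩, by omega⟩
  · intro i hi
    by_cases him : i ≤ m
    · simpa [him] using h2 i him
    · simpa [him] using hβ
  · intro i hi
    by_cases him : i < m
    · have := h3 i him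
      simpa [him.le, Nat.succ_le_of_lt him] using this
    · have : i = m := by omega
      subst this
      simpa [h1] using h

theorem aux_main {V : Type} [Fintype V] [DecidableEq V] (D : V → V → Prop) (hD : Oriented D)
    (hdeg : ∀ v, AuxU D v ∨ AuxU (fun x y => D y x) v)
    (hdeg3 : ∀ u v w w' a, D v u → D u w → D u w' → D u a → w ≠ w' → a ≠ w → a ≠ w' → False)
    (hdeg3' : ∀ u v w w' a, D u v → D w u → D w' u → D a u → w ≠ w' → a ≠ w → a ≠ w' → False)
    (n : ℕ) :
    ∀ (α β : V → Fin 2), IsDicolouring D 2 α → IsDicolouring D 2 β →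
      {v : V | α v ≠ β v}.ncard = n → AuxGood D (2 * n) α β := by
  induction n using Nat.strong_induction_on with
  | _ n ih =>
  intro α β hα hβ hn
  by_cases c1 : ∃ v, α v ≠ β v ∧ IsDicolouring D 2 (Function.update α v (β v))
  · obtain ⟨v, hv, hd⟩ := c1
    have hlt : {x : V | Function.update α v (β v) x ≠ β x}.ncard < n := by
      rw [← hn]
      apply Set.ncard_lt_ncard _ (Set.toFinite _)
      refine ⟨fun x hx => ?_, fun hs => ?_⟩
      · by_cases e : x = v
        · subst e; exact hv
        · simpa [Function.update_of_ne e] using hx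
      · exact (hs hv : _ ≠ _) (by simp)
    obtain ⟨m, γ, g1, g2, g3, g4⟩ := (ih _ hlt _ _ hd hβ rfl).cons hα (aux_adj _ _ _ hv)
    exact ⟨m, γ, g1, g2, g3, by omega⟩
  by_cases c2 : ∃ v, α v ≠ β v ∧ IsDicolouring D 2 (Function.update β v (α v))
  · obtain ⟨v, hv, hd⟩ := c2
    have hlt : {x : V | α x ≠ Function.update β v (α v) x}.ncard < n := by
      rw [← hn]
      apply Set.ncard_lt_ncard _ (Set.toFinite _)
      refine ⟨fun x hx => ?_, fun hs => ?_⟩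
      · by_cases e : x = v
        · subst e; exact hv
        · simpa [Function.update_of_ne e] using hx
      · exact (hs hv : _ ≠ _) (by simp)
    have hadj : RecolAdj (Function.update β v (α v)) β :=
      ⟨v, by simpa using hv, fun w hw => by simp [Function.update_of_ne hw]⟩
    obtain ⟨m, γ, g1, g2, g3, g4⟩ := (ih _ hlt _ _ hα hd rfl).snoc hβ hadj
    exact ⟨m, γ, g1, g2, g3, by omega⟩
  push Not at c1 c2
  by_cases c3 : ∃ v, α v ≠ β v
  · obtain ⟨v, hv⟩ := c3
    have core : ∃ (u : V) (a1 a2 a3 a4 : V → Fin 2), u ≠ v ∧ α u ≠ β u ∧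
      IsDicolouring D 2 a1 ∧ IsDicolouring D 2 a2 ∧ IsDicolouring D 2 a3 ∧ IsDicolouring D 2 a4 ∧
      RecolAdj α a1 ∧ RecolAdj a1 a2 ∧ RecolAdj a2 a3 ∧ RecolAdj a3 a4 ∧
      a4 = Function.update (Function.update α v (β v)) u (β u) := by
      rcases hdeg v with h | h
      · exact aux_core D hD hdeg hdeg3 α β hα hβ c1 c2 v hv h
      · have := aux_core (fun x y => D y x) (fun a b h => hD _ _ h) (fun v => (hdeg v).symm) hdeg3' α β
          ((aux_flip _ _ _).2 hα) ((aux_flip _ _ _).2 hβ)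
          (fun v hv h => c1 v hv ((aux_flip _ _ _).1 h))
          (fun v hv h => c2 v hv ((aux_flip _ _ _).1 h)) v hv h
        simpa only [aux_flip] using this
    obtain ⟨u, a1, a2, a3, a4, nuv, hu, d1, d2, d3, d4, r1, r2, r3, r4, e⟩ := core
    have hcard : {x : V | a4 x ≠ β x}.ncard + 2 ≤ n := by
      have hp := Set.ncard_pair nuv
      have hun : ({x : V | a4 x ≠ β x} ∪ {u, v}).ncard = _ :=
        Set.ncard_union_eq ?_ (Set.toFinite _) (Set.toFinite _)
      rw [hp] at hun
      rw [← hn, ← hun]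
      · apply Set.ncard_le_ncard _ (Set.toFinite _)
        rintro x (hx | hx)
        · by_cases e1 : x = u
          · subst e1; exact hu
          · by_cases e2 : x = v
            · subst e2; exact hv
            · simpa [e, Function.update_of_ne e1, Function.update_of_ne e2] using hx
        · rcases hx with rfl | rfl
          · exact hu
          · exact hv
      · rw [Set.disjoint_right]
        rintro x (rfl | rfl) hx
        · exact hx (by simp [e])
        · exact hx (by simp [e, Function.update_of_ne nuv.symm])
    obtain ⟨m, γ, g1, g2, g3, g4⟩ := ((((ih _ (by omega) _ _ d4 hβ rfl).cons d3 r4).cons d2 r3).cons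
      d1 r2).cons hα r1
    exact ⟨m, γ, g1, g2, g3, by omega⟩
  · push Not at c3
    obtain rfl : α = β := funext c3
    exact ⟨0, fun _ => α, rfl, rfl, ⟨fun _ _ => hα, fun i hi => absurd hi (by omega)⟩, by omega⟩

/-- Let `D` be a subcubic oriented graph on `n` vertices.  Then between any two
`2`-dicolourings `α` and `β` there is a redicolouring sequence of length at most
`2 · |{v : α v ≠ β v}|`; in particular `D_2(D)` is connected with diameter
at most `2n`. -/
theorem subcubic_oriented_two_mixing {V : Type} [Fintype V] (D : V → V → Prop)
    (horiented : Oriented D)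
    (hdeg : ∀ v : V, outDegOn D Set.univ v + inDegOn D Set.univ v ≤ 3)
    (α β : V → Fin 2) (hα : IsDicolouring D 2 α) (hβ : IsDicolouring D 2 β) :
    ∃ (m : ℕ) (γ : ℕ → V → Fin 2),
      γ 0 = α ∧ γ m = β ∧ RecolWalk D 2 m γ ∧
      m ≤ 2 * {v : V | α v ≠ β v}.ncard ∧
      m ≤ 2 * Fintype.card V := by
  classical
  have two : ∀ (S : Set V) (a b : V), a ∈ S → b ∈ S → a ≠ b → 2 ≤ S.ncard := by
    intro S a b ha hb hab
    rw [← Set.ncard_pair hab]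
    exact Set.ncard_le_ncard (by rintro x (rfl | rfl) <;> assumption) (Set.toFinite _)
  have three : ∀ (S : Set V) (a b c : V), a ∈ S → b ∈ S → c ∈ S → a ≠ b → c ≠ a → c ≠ b →
      3 ≤ S.ncard := by
    intro S a b c ha hb hc hab hca hcb
    have : ({c, a, b} : Set V).ncard = 3 := by
      rw [Set.ncard_eq_three]; exact ⟨c, a, b, hca, hcb, hab, rfl⟩
    rw [← this]
    exact Set.ncard_le_ncard (by rintro x (rfl | rfl | rfl) <;> assumption) (Set.toFinite _)
  have one : ∀ (S : Set V) (a : V), a ∈ S → 1 ≤ S.ncard := by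
    intro S a ha
    exact (Set.ncard_pos (Set.toFinite _)).2 ⟨a, ha⟩
  have hU : ∀ v, AuxU D v ∨ AuxU (fun x y => D y x) v := by
    intro v
    by_contra hcon
    simp only [AuxU] at hcon
    push Not at hcon
    obtain ⟨⟨a, b, h1, h2, h3⟩, ⟨c, d, h4, h5, h6⟩⟩ := hcon
    have k1 := two {w ∈ Set.univ | D v w} a b ⟨trivial, h1⟩ ⟨trivial, h2⟩ h3
    have k2 := two {w ∈ Set.univ | D w v} c d ⟨trivial, h4⟩ ⟨trivial, h5⟩ h6
    have := hdeg v
    unfold outDegOn inDegOn at this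
    omega
  have g := aux_main D horiented hU
    (by
      intro u v w w' a h1 h2 h3 h4 h5 h6 h7
      have k1 := three {w ∈ Set.univ | D u w} w w' a ⟨trivial, h2⟩ ⟨trivial, h3⟩ ⟨trivial, h4⟩ h5 h6 h7
      have k2 := one {w ∈ Set.univ | D w u} v ⟨trivial, h1⟩
      have := hdeg u
      unfold outDegOn inDegOn at this
      omega)
    (by
      intro u v w w' a h1 h2 h3 h4 h5 h6 h7
      have k1 := three {w ∈ Set.univ | D w u} w w' a ⟨trivial, h2⟩ ⟨trivial, h3⟩ ⟨trivial, h4⟩ h5 h6 h7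
      have k2 := one {w ∈ Set.univ | D u w} v ⟨trivial, h1⟩
      have := hdeg u
      unfold outDegOn inDegOn at this
      omega) _ α β hα hβ rfl
  obtain ⟨m, γ, g1, g2, g3, g4⟩ := g
  refine ⟨m, γ, g1, g2, g3, g4, g4.trans ?_⟩
  have : {v : V | α v ≠ β v}.ncard ≤ Fintype.card V := by
    rw [← Nat.card_eq_fintype_card]; exact Set.ncard_le_card _
  omega
end

section
/- A subcubic digraph D (every vertex has total degree at most 3) is 2-mixing if and only if D is an oriented graph, i.e. contains no digon. -/
/-- A monochromatic set in which every vertex has an in- and an out-neighbour. -/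
def BadSet {V : Type} (D : V → V → Prop) {k : ℕ} (f : V → Fin k) (c : Fin k) (C : Set V) : Prop :=
  ∀ x ∈ C, f x = c ∧ (∃ y ∈ C, D x y) ∧ (∃ y ∈ C, D y x)

theorem dic_iff {V : Type} [Fintype V] (D : V → V → Prop) {k : ℕ} (f : V → Fin k) :
    IsDicolouring D k f ↔ ∀ c C, C.Nonempty → ¬ BadSet D f c C := by
  constructor
  · intro h c C hC hB
    have hac := h c
    set r : V → V → Prop := fun u v => D u v ∧ f u = c ∧ f v = c with hr
    haveI : IsTrans V (fun x y => Relation.TransGen r y x) :=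
      ⟨fun a b d h1 h2 => h2.trans h1⟩
    haveI : Std.Irrefl (fun x y => Relation.TransGen r y x) := ⟨fun a => hac a⟩
    have wf : WellFounded (fun x y => Relation.TransGen r y x) :=
      Finite.wellFounded_of_trans_of_irrefl _
    obtain ⟨m, hm, hmin⟩ := wf.has_min C hC
    obtain ⟨h1, ⟨y, hy, hD⟩, -⟩ := hB m hm
    exact hmin y hy (Relation.TransGen.single ⟨hD, h1, (hB y hy).1⟩)
  · intro h c v hv
    set r : V → V → Prop := fun u v => D u v ∧ f u = c ∧ f v = c with hr
    refine h c {x | Relation.TransGen r v x ∧ Relation.TransGen r x v} ⟨v, hv, hv⟩ ?_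
    rintro x ⟨h1, h2⟩
    obtain ⟨y, hy, hyv⟩ := (Relation.TransGen.head'_iff).1 h2
    obtain ⟨z, hvz, hz⟩ := (Relation.TransGen.tail'_iff).1 h1
    refine ⟨hy.2.1, ⟨y, ⟨h1.tail hy, ?_⟩, hy.1⟩, ⟨z, ⟨?_, Relation.TransGen.head hz h2⟩, hz.1⟩⟩
    · exact Relation.TransGen.trans_right hyv hv
    · exact Relation.TransGen.trans_left hv hvz

/-- Every vertex has in-degree or out-degree at most one. -/
def MinDeg {V : Type} (D : V → V → Prop) : Prop :=
  ∀ v p p' q q', D p v → D p' v → D v q → D v q' → p = p' ∨ q = q'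

/-- Delete the arcs at `v`. -/
def del {V : Type} (D : V → V → Prop) (v : V) : V → V → Prop :=
  fun x y => D x y ∧ x ≠ v ∧ y ≠ v

theorem minDeg_of {V : Type} [Fintype V] (D : V → V → Prop)
    (hdeg : ∀ v : V, outDegOn D Set.univ v + inDegOn D Set.univ v ≤ 3) : MinDeg D := by
  intro v p p' q q' h1 h2 h3 h4
  by_contra! hne
  have e1 : 2 ≤ outDegOn D Set.univ v := by
    rw [← Set.ncard_pair hne.2]
    apply Set.ncard_le_ncard _ (Set.toFinite _)
    rintro x (rfl | rfl) <;> simp [h3, h4]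
  have e2 : 2 ≤ inDegOn D Set.univ v := by
    rw [← Set.ncard_pair hne.1]
    apply Set.ncard_le_ncard _ (Set.toFinite _)
    rintro x (rfl | rfl) <;> simp [h1, h2]
  have := hdeg v
  omega

theorem del_lt {V : Type} [Fintype V] (D : V → V → Prop) (v : V)
    (h : ∃ y, D v y ∨ D y v) : (arcSet (del D v)).ncard < (arcSet D).ncard := by
  apply Set.ncard_lt_ncard _ (Set.toFinite _)
  rw [Set.ssubset_iff_of_subset (fun p hp => hp.1)]
  obtain ⟨y, hy | hy⟩ := h
  · exact ⟨(v, y), hy, fun hh => hh.2.1 rfl⟩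
  · exact ⟨(y, v), hy, fun hh => hh.2.2 rfl⟩

theorem MinDeg.del {V : Type} {D : V → V → Prop} (h : MinDeg D) (v : V) : MinDeg (del D v) :=
  fun w p p' q q' h1 h2 h3 h4 => h w p p' q q' h1.1 h2.1 h3.1 h4.1

theorem dic_del {V : Type} [Fintype V] {D : V → V → Prop} {k : ℕ} {f : V → Fin k} (v : V)
    (h : IsDicolouring D k f) : IsDicolouring (del D v) k f := by
  rw [dic_iff] at h ⊢
  intro c C hC hB
  refine h c C hC fun x hx => ?_
  obtain ⟨h1, ⟨y, hy, hy'⟩, ⟨z, hz, hz'⟩⟩ := hB x hx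
  exact ⟨h1, ⟨y, hy, hy'.1⟩, ⟨z, hz, hz'.1⟩⟩

/-- A bad set avoiding `v` stays bad after deleting `v` and after changing colours
outside of it. -/
theorem BadSet.mem {V : Type} [Fintype V] {D : V → V → Prop} {k : ℕ} {f g : V → Fin k}
    {v : V} {c : Fin k} {C : Set V} (hB : BadSet D f c C) (hC : C.Nonempty)
    (hg : IsDicolouring (del D v) k g) (hfg : ∀ w, w ≠ v → f w = g w) : v ∈ C := by
  by_contra hv
  have hn : ∀ x ∈ C, x ≠ v := fun x hx h => hv (h ▸ hx)
  rw [dic_iff] at hg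
  refine hg c C hC fun x hx => ?_
  obtain ⟨h1, ⟨y, hy, hy'⟩, ⟨z, hz, hz'⟩⟩ := hB x hx
  exact ⟨(hfg x (hn x hx)) ▸ h1, ⟨y, hy, hy', hn _ hx, hn _ hy⟩,
    ⟨z, hz, hz', hn _ hz, hn _ hx⟩⟩

theorem exists_dic {V : Type} [Fintype V] : ∀ (n : ℕ) (D : V → V → Prop),
    (arcSet D).ncard = n → Irreflexive D → MinDeg D → ∃ f, IsDicolouring D 2 f := by
  classical
  intro n
  induction n using Nat.strong_induction_on with
  | _ n ih =>
  intro D hn hirr hmin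
  by_cases hex : ∃ v y, D v y ∨ D y v
  · obtain ⟨v, hv⟩ := hex
    obtain ⟨f, hf⟩ := ih _ (hn ▸ del_lt D v hv) (del D v) rfl (fun x hx => hirr x hx.1)
      (hmin.del v)
    by_contra! hno
    have key : ∀ d : Fin 2, ∃ C : Set V, v ∈ C ∧ ∃ c, BadSet D (Function.update f v d) c C := by
      intro d
      have := hno (Function.update f v d)
      rw [dic_iff] at this
      push Not at this
      obtain ⟨c, C, hC, hB⟩ := this
      exact ⟨C, hB.mem hC hf (fun w hw => Function.update_of_ne hw _ _), c, hB⟩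
    obtain ⟨C, hv1, c, hB⟩ := key 0
    obtain ⟨C', hv2, c', hB'⟩ := key 1
    have hc : c = 0 := by have := (hB v hv1).1; simpa using this.symm
    have hc' : c' = 1 := by have := (hB' v hv2).1; simpa using this.symm
    have hdis : ∀ y, y ∈ C → y ∈ C' → y = v := by
      intro y hy hy'
      by_contra hyv
      have e1 := (hB y hy).1
      have e2 := (hB' y hy').1
      rw [Function.update_of_ne hyv] at e1 e2
      rw [hc] at e1; rw [hc'] at e2; rw [e1] at e2; exact absurd e2 (by decide)
    obtain ⟨-, ⟨q, hq, hq'⟩, ⟨p, hp, hp'⟩⟩ := hB v hv1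
    obtain ⟨-, ⟨s, hs, hs'⟩, ⟨r, hr, hr'⟩⟩ := hB' v hv2
    rcases hmin v p r q s hp' hr' hq' hs' with rfl | rfl
    · have := hdis p hp hr; subst this; exact hirr _ hp'
    · have := hdis q hq hs; subst this; exact hirr _ hq'
  · refine ⟨fun _ => 0, ?_⟩
    rw [dic_iff]
    rintro c C ⟨x, hx⟩ hB
    obtain ⟨-, ⟨y, -, hy⟩, -⟩ := hB x hx
    exact hex ⟨x, y, Or.inl hy⟩

theorem oriented_of_mixing {V : Type} [Fintype V] (D : V → V → Prop) (hirr : Irreflexive D)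
    (hmin : MinDeg D) (hM : Mixing D 2) : Oriented D := by
  intro u v huv hvu
  obtain ⟨f, hf⟩ := exists_dic _ D rfl hirr hmin
  have hne : ∀ g, IsDicolouring D 2 g → g u ≠ g v := by
    intro g hg he
    rw [dic_iff] at hg
    refine hg (g u) {u, v} ⟨u, by simp⟩ ?_
    rintro x (rfl | rfl)
    · exact ⟨rfl, ⟨v, by simp, huv⟩, ⟨v, by simp, hvu⟩⟩
    · exact ⟨he.symm, ⟨u, by simp, hvu⟩, ⟨u, by simp, huv⟩⟩
  have hf' : IsDicolouring D 2 (fun x => 1 - f x) := by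
    rw [dic_iff] at hf ⊢
    intro c C hC hB
    refine hf (1 - c) C hC fun x hx => ⟨?_, (hB x hx).2⟩
    have := (hB x hx).1
    rw [← this]; simp
  have hinv : ∀ g, Relation.ReflTransGen (RecolStep D 2) f g → g u = f u := by
    intro g hg
    induction hg with
    | refl => rfl
    | tail _ hs ih =>
      rename_i b d _
      obtain ⟨hb, hd, w, hw, hw'⟩ := hs
      have h1 := hne b hb
      have h2 := hne d hd
      rw [← ih]
      by_cases hwu : u = w
      · have : v ≠ w := by rintro rfl; subst hwu; exact h1 rfl
        have := hw' v this
        rw [← hwu] at hw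
        omega
      · exact (hw' u hwu).symm
  have := hinv _ (hM f _ hf hf')
  have h2 : ∀ t : Fin 2, 1 - t ≠ t := by decide
  exact h2 _ this

/-- Matched pair. -/
def QP {V : Type} (D : V → V → Prop) (a v : V) : Prop :=
  D a v ∧ (∀ y, D y v → y = a) ∧ (∀ y, D a y → y = v) ∧ ∃ q s, q ≠ s ∧ D v q ∧ D v s

theorem step_update {V : Type} [Fintype V] [DecidableEq V] {D : V → V → Prop} {k : ℕ}
    {f : V → Fin k} {v : V} {c : Fin k}
    (hf : IsDicolouring D k f) (hg : IsDicolouring D k (Function.update f v c)) :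
    Relation.ReflTransGen (RecolStep D k) f (Function.update f v c) := by
  by_cases h : c = f v
  · rw [h, Function.update_eq_self]
  · refine Relation.ReflTransGen.single ⟨hf, hg, v, ?_, ?_⟩
    · simpa using Ne.symm h
    · intro w hw; simp [hw]

theorem lift_step_s7 {V : Type} [Fintype V] [DecidableEq V] {D : V → V → Prop} (hor : Oriented D)
    (hmin : MinDeg D) (v : V) (hnQ : ∀ x, ¬ QP D x v ∧ ¬ QP D v x)
    {g : V → Fin 2} (hg : IsDicolouring D 2 g) {x : V} (hx : x ≠ v) {c : Fin 2}
    (hc : g x ≠ c) (hd : IsDicolouring (del D v) 2 (Function.update g x c)) :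
    ∃ h, Relation.ReflTransGen (RecolStep D 2) g h ∧ IsDicolouring D 2 h ∧
      ∀ w, w ≠ v → h w = Function.update g x c w := by
  by_cases h1 : IsDicolouring D 2 (Function.update g x c)
  · exact ⟨_, step_update hg h1, h1, fun _ _ => rfl⟩
  by_cases h2 : IsDicolouring D 2 (Function.update g v (g x))
  · have h3 : IsDicolouring D 2 (Function.update (Function.update g v (g x)) x c) := by
      rw [dic_iff]
      intro e C hC hB
      have hv : v ∈ C := hB.mem hC hd (by
        intro w hw
        by_cases hwx : w = x
        · subst hwx; simp
        · simp [hw, hwx])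
      have he := (hB v hv).1
      rw [Function.update_of_ne (Ne.symm hx), Function.update_self] at he
      have hxC : x ∉ C := by
        intro hxC
        have := (hB x hxC).1
        rw [Function.update_self] at this
        exact hc (he.trans this.symm)
      rw [dic_iff] at h2
      refine h2 e C hC fun y hy => ⟨?_, (hB y hy).2⟩
      rw [← (hB y hy).1, Function.update_of_ne (a := y) (a' := x)]
      rintro rfl; exact hxC hy
    refine ⟨_, (step_update hg h2).trans (step_update h2 h3), h3, ?_⟩
    intro w hw
    by_cases hwx : w = x
    · subst hwx; simp
    · simp [hw, hwx]
  exfalso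
  have hirr : ∀ y, ¬ D y y := fun y hy => hor y y hy hy
  rw [dic_iff] at h1 h2
  push Not at h1 h2
  obtain ⟨c1, C1, hC1, hB1⟩ := h1
  obtain ⟨c2, C2, hC2, hB2⟩ := h2
  have hv1 : v ∈ C1 := hB1.mem hC1 hd (fun _ _ => rfl)
  have hv2 : v ∈ C2 := hB2.mem hC2 (dic_del v hg) (fun w hw => Function.update_of_ne hw _ _)
  have hx1 : x ∈ C1 := hB1.mem hC1 (dic_del x hg) (fun w hw => Function.update_of_ne hw _ _)
  have hc1 : c1 = c := by have := (hB1 x hx1).1; simpa using this.symm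
  have hc2 : c2 = g x := by have := (hB2 v hv2).1; simpa using this.symm
  have hdis : ∀ y, y ∈ C1 → y ∈ C2 → y = x ∨ y = v := by
    intro y hy hy'
    by_contra! hyv
    have e1 := (hB1 y hy).1
    have e2 := (hB2 y hy').1
    rw [Function.update_of_ne hyv.1] at e1
    rw [Function.update_of_ne hyv.2] at e2
    exact hc (hc2 ▸ hc1 ▸ e2.symm.trans e1)
  obtain ⟨-, ⟨q, hq, hq'⟩, ⟨p, hp, hp'⟩⟩ := hB1 v hv1
  obtain ⟨-, ⟨s, hs, hs'⟩, ⟨r, hr, hr'⟩⟩ := hB2 v hv2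
  obtain ⟨-, ⟨q1, hq1, hq1'⟩, ⟨p1, hp1, hp1'⟩⟩ := hB1 x hx1
  rcases hmin v p r q s hp' hr' hq' hs' with rfl | rfl
  · have hpx : p = x := (hdis p hp hr).resolve_right (by rintro rfl; exact hirr _ hp')
    subst hpx
    obtain ⟨-, -, ⟨p2, hp2, hp2'⟩⟩ := hB2 p hr
    have hqs : q ≠ s := by
      rintro rfl
      rcases hdis q hq hs with rfl | rfl
      · exact hor _ _ hp' hq'
      · exact hirr _ hq'
    have hpp : p1 ≠ p2 := by
      rintro rfl
      rcases hdis p1 hp1 hp2 with rfl | rfl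
      · exact hirr _ hp1'
      · exact hor _ _ hp' hp1'
    refine (hnQ p).1 ⟨hp', fun y hy => ?_, fun y hy => ?_, q, s, hqs, hq', hs'⟩
    · exact (hmin v y p q s hy hp' hq' hs').resolve_right hqs
    · exact (hmin p p1 p2 y v hp1' hp2' hy hp').resolve_left hpp
  · have hqx : q = x := (hdis q hq hs).resolve_right (by rintro rfl; exact hirr _ hq')
    subst hqx
    obtain ⟨-, ⟨q2, hq2, hq2'⟩, -⟩ := hB2 q hs
    have hpr : p ≠ r := by
      rintro rfl
      rcases hdis p hp hr with rfl | rfl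
      · exact hor _ _ hp' hq'
      · exact hirr _ hp'
    have hqq : q1 ≠ q2 := by
      rintro rfl
      rcases hdis q1 hq1 hq2 with rfl | rfl
      · exact hirr _ hq1'
      · exact hor _ _ hq' hq1'
    refine (hnQ q).2 ⟨hq', fun y hy => ?_, fun y hy => ?_, q1, q2, hqq, hq1', hq2'⟩
    · exact (hmin q y v q1 q2 hy hq' hq1' hq2').resolve_right hqq
    · exact (hmin v p r y q hp' hr' hy hq').resolve_left hpr

theorem eq_update {V : Type} [DecidableEq V] {k : ℕ} {f g : V → Fin k} {v : V}
    (h : ∀ w, w ≠ v → f w = g w) : g = Function.update f v (g v) := by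
  funext w
  by_cases hw : w = v
  · subst hw; simp
  · simp [hw, h w hw]

theorem mixing_of_del {V : Type} [Fintype V] {D : V → V → Prop} (hor : Oriented D)
    (hmin : MinDeg D) (v : V) (hnQ : ∀ x, ¬ QP D x v ∧ ¬ QP D v x)
    (hM : Mixing (del D v) 2) : Mixing D 2 := by
  classical
  intro α β hα hβ
  have key : ∀ γ, Relation.ReflTransGen (RecolStep (del D v) 2) α γ →
      ∃ h, Relation.ReflTransGen (RecolStep D 2) α h ∧ IsDicolouring D 2 h ∧
        ∀ w, w ≠ v → h w = γ w := by
    intro γ hγ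
    induction hγ with
    | refl => exact ⟨α, .refl, hα, fun _ _ => rfl⟩
    | tail _ hs ih =>
      rename_i b d _
      obtain ⟨h, hr, hh, hw⟩ := ih
      obtain ⟨hb, hd, x, hx, hx'⟩ := hs
      by_cases hxv : x = v
      · subst hxv
        exact ⟨h, hr, hh, fun w hwx => (hw w hwx).trans (hx' w hwx)⟩
      · have hagree : ∀ w, w ≠ v → Function.update h x (d x) w = d w := by
          intro w hwv
          by_cases hwx : w = x
          · subst hwx; simp
          · simp [hwx, hw w hwv, hx' w hwx]
        have hd' : IsDicolouring (del D v) 2 (Function.update h x (d x)) := by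
          rw [dic_iff]
          intro c C hC hB
          by_cases hvC : v ∈ C
          · obtain ⟨-, ⟨y, -, hy⟩, -⟩ := hB v hvC
            exact hy.2.1 rfl
          · rw [dic_iff] at hd
            refine hd c C hC fun y hy => ⟨?_, (hB y hy).2⟩
            rw [← (hB y hy).1, hagree]
            rintro rfl; exact hvC hy
        obtain ⟨h', hr', hh', hw'⟩ := lift_step_s7 hor hmin v hnQ hh hxv
          (by rw [hw x hxv]; exact hx) hd'
        exact ⟨h', hr.trans hr', hh', fun w hwv => (hw' w hwv).trans (hagree w hwv)⟩
  obtain ⟨h, hr, hh, hw⟩ := key β (hM α β (dic_del v hα) (dic_del v hβ))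
  have := eq_update hw
  rw [this] at hβ ⊢
  exact hr.trans (step_update hh hβ)

/-- Colourings in which every matched pair is bichromatic. -/
def Mixed {V : Type} (D : V → V → Prop) (f : V → Fin 2) : Prop :=
  ∀ a v, QP D a v → f a ≠ f v

theorem almost_dic {V : Type} [Fintype V] {D : V → V → Prop} (hor : Oriented D)
    (hQ : ∀ v, (∃ y, D v y ∨ D y v) → ∃ x, QP D x v ∨ QP D v x)
    {f : V → Fin 2} {a v : V} (hav : QP D a v)
    (hf : ∀ b w, QP D b w → f b = f w → b = a ∧ w = v) : IsDicolouring D 2 f := by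
  rw [dic_iff]
  rintro c C ⟨z, hz⟩ hB
  have hin : ∀ y ∈ C, y = a ∨ y = v := by
    intro y hy
    obtain ⟨h1, ⟨q, hq, hq'⟩, ⟨p, hp, hp'⟩⟩ := hB y hy
    obtain ⟨x, hx | hx⟩ := hQ y ⟨q, Or.inl hq'⟩
    · have := hx.2.1 p hp'
      subst this
      exact Or.inr (hf _ _ hx ((hB _ hp).1.trans h1.symm)).2
    · have := hx.2.2.1 q hq'
      subst this
      exact Or.inl (hf _ _ hx (h1.trans (hB _ hq).1.symm)).1
  have hv : v ∈ C := by
    rcases hin z hz with rfl | rfl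
    · obtain ⟨-, ⟨q, hq, hq'⟩, -⟩ := hB z hz
      have := hav.2.2.1 q hq'
      exact this ▸ hq
    · exact hz
  obtain ⟨-, ⟨q, hq, hq'⟩, -⟩ := hB v hv
  rcases hin q hq with rfl | rfl
  · exact hor _ _ hq' hav.1
  · exact hor _ _ hq' hq'

theorem QP.uniq {V : Type} {D : V → V → Prop} {a v b w : V} (h : QP D a v) (h' : QP D b w)
    (hh : b = a ∨ b = v ∨ w = a ∨ w = v) : b = a ∧ w = v := by
  rcases hh with rfl | rfl | rfl | rfl
  · exact ⟨rfl, (h.2.2.1 w h'.1)⟩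
  · obtain ⟨q, s, hqs, hq, hs⟩ := h.2.2.2
    exact absurd ((h'.2.2.1 q hq).trans (h'.2.2.1 s hs).symm) hqs
  · obtain ⟨q, s, hqs, hq, hs⟩ := h'.2.2.2
    exact absurd ((h.2.2.1 q hq).trans (h.2.2.1 s hs).symm) hqs
  · exact ⟨h.2.1 b h'.1, rfl⟩

theorem dic_flip {V : Type} [Fintype V] [DecidableEq V] {D : V → V → Prop} (hor : Oriented D)
    {f : V → Fin 2} (hf : IsDicolouring D 2 f) {a v : V} (hav : QP D a v) {c : Fin 2}
    (hc : f a ≠ c) : IsDicolouring D 2 (Function.update f v c) := by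
  rw [dic_iff]
  intro e C hC hB
  have hv : v ∈ C := hB.mem hC (dic_del v hf) (fun w hw => Function.update_of_ne hw _ _)
  obtain ⟨h1, -, ⟨p, hp, hp'⟩⟩ := hB v hv
  have := hav.2.1 p hp'
  subst this
  have h2 := (hB p hp).1
  rw [Function.update_self] at h1
  rw [Function.update_of_ne (by rintro rfl; exact hor _ _ hp' hp')] at h2
  exact hc (h2.trans h1.symm)

theorem to_mixed {V : Type} [Fintype V] {D : V → V → Prop} (hor : Oriented D) :
    ∀ (n : ℕ) (f : V → Fin 2), IsDicolouring D 2 f →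
      {v | ∃ a, QP D a v ∧ f a = f v}.ncard = n →
      ∃ g, IsDicolouring D 2 g ∧ Mixed D g ∧ Relation.ReflTransGen (RecolStep D 2) f g ∧
        Relation.ReflTransGen (RecolStep D 2) g f := by
  classical
  intro n
  induction n using Nat.strong_induction_on with
  | _ n ih =>
  intro f hf hn
  by_cases hm : Mixed D f
  · exact ⟨f, hf, hm, .refl, .refl⟩
  unfold Mixed at hm
  push Not at hm
  obtain ⟨a, v, hav, he⟩ := hm
  have hne : a ≠ v := by rintro rfl; exact hor _ _ hav.1 hav.1
  have hc : f a ≠ 1 - f v := by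
    rw [he]; generalize f v = t; revert t; decide
  have hd := dic_flip hor hf hav hc
  obtain ⟨g, h1, h2, h3, h4⟩ := ih _ (by
    rw [← hn]
    apply Set.ncard_lt_ncard _ (Set.toFinite _)
    rw [Set.ssubset_iff_of_subset]
    · refine ⟨v, ⟨a, hav, he⟩, ?_⟩
      rintro ⟨b, hb, hb'⟩
      have := hav.2.1 b hb.1
      subst this
      rw [Function.update_self, Function.update_of_ne hne] at hb'
      exact hc hb'
    · rintro w ⟨b, hb, hb'⟩
      by_cases hh : b = v ∨ w = v
      · obtain ⟨rfl, rfl⟩ := hav.uniq hb (by tauto)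
        exact ⟨_, hav, he⟩
      · push Not at hh
        rw [Function.update_of_ne hh.1, Function.update_of_ne hh.2] at hb'
        exact ⟨b, hb, hb'⟩) (Function.update f v (1 - f v)) hd rfl
  refine ⟨g, h1, h2, (step_update hf hd).trans h3, h4.trans ?_⟩
  have := step_update (v := v) (c := f v) hd (by simpa using hf)
  simpa using this

theorem mixed_mixed {V : Type} [Fintype V] {D : V → V → Prop} (hor : Oriented D)
    (hQ : ∀ v, (∃ y, D v y ∨ D y v) → ∃ x, QP D x v ∨ QP D v x) (g : V → Fin 2)
    (hgd : IsDicolouring D 2 g) (hg : Mixed D g) :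
    ∀ (n : ℕ) (f : V → Fin 2), IsDicolouring D 2 f → Mixed D f → {v | f v ≠ g v}.ncard = n →
      Relation.ReflTransGen (RecolStep D 2) f g := by
  classical
  intro n
  induction n using Nat.strong_induction_on with
  | _ n ih =>
  intro f hfd hf hn
  by_cases hfg : f = g
  · rw [hfg]
  obtain ⟨w, hw⟩ := Function.ne_iff.1 hfg
  by_cases hiso : ∃ y, D w y ∨ D y w
  · have : ∃ a v, QP D a v ∧ (w = a ∨ w = v) := by
      obtain ⟨x, hx | hx⟩ := hQ w hiso
      · exact ⟨x, w, hx, Or.inr rfl⟩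
      · exact ⟨w, x, hx, Or.inl rfl⟩
    obtain ⟨a, v, hav, hwav⟩ := this
    have hne : a ≠ v := by rintro rfl; exact hor _ _ hav.1 hav.1
    have e1 := hf a v hav
    have e2 := hg a v hav
    have e3 : f a ≠ g a ∧ f v ≠ g v := by
      rcases hwav with rfl | rfl
      · refine ⟨hw, ?_⟩; omega
      · refine ⟨?_, hw⟩; omega
    have d1 : IsDicolouring D 2 (Function.update f v (g v)) := by
      refine almost_dic hor hQ hav ?_
      intro b u hb hbu
      by_cases hh : b = v ∨ u = v
      · exact hav.uniq hb (by tauto)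
      · push Not at hh
        rw [Function.update_of_ne hh.1, Function.update_of_ne hh.2] at hbu
        exact absurd hbu (hf b u hb)
    have m2 : Mixed D (Function.update (Function.update f v (g v)) a (g a)) := by
      intro b u hb
      by_cases hh : b = a ∨ b = v ∨ u = a ∨ u = v
      · obtain ⟨rfl, rfl⟩ := hav.uniq hb hh
        simpa [hne.symm] using e2
      · push Not at hh
        simpa [hh] using hf b u hb
    have d2 : IsDicolouring D 2 (Function.update (Function.update f v (g v)) a (g a)) :=
      almost_dic hor hQ hav (fun b u hb hbu => absurd hbu (m2 b u hb))
    refine ((step_update hfd d1).trans (step_update d1 d2)).trans (ih _ ?_ _ d2 m2 rfl)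
    rw [← hn]
    apply Set.ncard_lt_ncard _ (Set.toFinite _)
    rw [Set.ssubset_iff_of_subset]
    · exact ⟨a, e3.1, by simp⟩
    · intro u hu
      by_cases hua : u = a
      · subst hua; exact e3.1
      by_cases huv : u = v
      · subst huv; exact e3.2
      simpa [hua, huv] using hu
  · have hnQ : ∀ b u, QP D b u → b ≠ w ∧ u ≠ w := by
      intro b u hb
      constructor
      · rintro rfl; exact hiso ⟨u, Or.inl hb.1⟩
      · rintro rfl; exact hiso ⟨b, Or.inr hb.1⟩
    have m1 : Mixed D (Function.update f w (g w)) := by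
      intro b u hb
      obtain ⟨h1, h2⟩ := hnQ b u hb
      simpa [h1, h2] using hf b u hb
    have d1 : IsDicolouring D 2 (Function.update f w (g w)) := by
      rw [dic_iff]
      intro e C hC hB
      have hv : w ∈ C := hB.mem hC (dic_del w hfd) (fun u hu => Function.update_of_ne hu _ _)
      obtain ⟨-, ⟨y, -, hy⟩, -⟩ := hB w hv
      exact hiso ⟨y, Or.inl hy⟩
    refine (step_update hfd d1).trans (ih _ ?_ _ d1 m1 rfl)
    rw [← hn]
    apply Set.ncard_lt_ncard _ (Set.toFinite _)
    rw [Set.ssubset_iff_of_subset]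
    · exact ⟨w, hw, by simp⟩
    · intro u hu
      by_cases huw : u = w
      · subst huw; exact hw
      simpa [huw] using hu

theorem mixing_of_oriented {V : Type} [Fintype V] : ∀ (n : ℕ) (D : V → V → Prop),
    (arcSet D).ncard = n → Oriented D → MinDeg D → Mixing D 2 := by
  intro n
  induction n using Nat.strong_induction_on with
  | _ n ih =>
  intro D hn hor hmin
  by_cases hQ : ∀ v, (∃ y, D v y ∨ D y v) → ∃ x, QP D x v ∨ QP D v x
  · intro α β hα hβ
    obtain ⟨a, ha, ha1, ha2, -⟩ := to_mixed hor _ α hα rfl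
    obtain ⟨b, hb, hb1, -, hb2⟩ := to_mixed hor _ β hβ rfl
    exact ha2.trans ((mixed_mixed hor hQ b hb hb1 _ a ha ha1 rfl).trans hb2)
  · push Not at hQ
    obtain ⟨v, hv, hnQ⟩ := hQ
    exact mixing_of_del hor hmin v hnQ
      (ih _ (hn ▸ del_lt D v hv) (del D v) rfl (fun x y h h' => hor x y h.1 h'.1) (hmin.del v))

/-- A subcubic digraph is `2`-mixing if and only if it is an oriented graph,
i.e. contains no digon. -/
theorem subcubic_two_mixing_iff_oriented {V : Type} [Fintype V] (D : V → V → Prop)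
    (hloopless : Irreflexive D)
    (hdeg : ∀ v : V, outDegOn D Set.univ v + inDegOn D Set.univ v ≤ 3) :
    Mixing D 2 ↔ Oriented D :=
  ⟨oriented_of_mixing D hloopless (minDeg_of D hdeg),
    fun h => mixing_of_oriented _ D rfl h (minDeg_of D hdeg)⟩
end

section
/- For all positive integers k and ℓ, there exists a (k−1)-regular k-freezable undirected graph with girth at least ℓ. -/
/-- `α` is a proper `k`-colouring of the simple graph `G`. -/
def IsProperColoring {V : Type} (G : SimpleGraph V) (k : ℕ) (α : V → Fin k) : Prop :=
  ∀ u v, G.Adj u v → α u ≠ α v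

/-- A frozen `k`-colouring: no single vertex can be recoloured so as to yield
another proper `k`-colouring. -/
def FrozenColoring {V : Type} [DecidableEq V] (G : SimpleGraph V) (k : ℕ)
    (α : V → Fin k) : Prop :=
  IsProperColoring G k α ∧
    ∀ (v : V) (c : Fin k), c ≠ α v → ¬ IsProperColoring G k (Function.update α v c)

/-- reduced words of bounded length -/
abbrev RWord (E : Type) (L : ℕ) : Type := {l : List E // l.IsChain (· ≠ ·) ∧ l.length ≤ L}

open Classical in
/-- toggling the letter `e` at the head of a word -/
noncomputable def tog {E : Type} {L : ℕ} (e : E) (w : RWord E L) : RWord E L :=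
  if h : w.1.head? = some e then
    ⟨w.1.tail, w.2.1.tail, by have := w.2.2; simp; omega⟩
  else if h2 : w.1.length < L then
    ⟨e :: w.1, by
      rw [List.isChain_cons]
      refine ⟨fun y hy hey => h ?_, w.2.1⟩
      subst hey
      exact hy, by simpa using h2⟩
  else w

theorem tog_cons {E : Type} {L : ℕ} (e : E) (w : RWord E L) (h : w.1.head? ≠ some e)
    (h2 : w.1.length < L) : (tog e w).1 = e :: w.1 := by
  unfold tog
  rw [dif_neg h, dif_pos h2]

theorem tog_invol {E : Type} {L : ℕ} (e : E) : Function.Involutive (tog (L := L) e) := by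
  rintro ⟨l, hc, hl⟩
  apply Subtype.ext
  by_cases h : l.head? = some e
  · obtain ⟨t, rfl⟩ : ∃ t, l = e :: t := by
      cases l with
      | nil => simp at h
      | cons a t => simp at h; exact ⟨t, by rw [h]⟩
    have h1 : (tog e (⟨e :: t, hc, hl⟩ : RWord E L)).1 = t := by
      unfold tog
      rw [dif_pos h]
      rfl
    rw [tog_cons, h1]
    · rw [h1]
      intro h3
      rw [List.isChain_cons] at hc
      exact hc.1 e h3 rfl
    · rw [h1]; simpa using hl
  · by_cases h2 : l.length < L
    · have h1 := tog_cons e (⟨l, hc, hl⟩ : RWord E L) h h2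
      generalize tog e (⟨l, hc, hl⟩ : RWord E L) = w at h1
      unfold tog
      rw [dif_pos (by rw [h1]; rfl)]
      simp [h1]
    · have h1 : tog e (⟨l, hc, hl⟩ : RWord E L) = ⟨l, hc, hl⟩ := by
        unfold tog
        rw [dif_neg h, dif_neg h2]
      rw [h1, h1]

instance (E : Type) [Finite E] (L : ℕ) : Finite (RWord E L) := by
  have := (List.finite_length_le E L).to_subtype
  exact Finite.of_injective
    (fun w : RWord E L => (⟨w.1, w.2.2⟩ : {l : List E | l.length ≤ L}))
    (fun a b h => Subtype.ext (by simpa using h))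

/-- the lift of the complete graph -/
def liftG (k L : ℕ) : SimpleGraph (Fin k × Equiv.Perm (RWord (Sym2 (Fin k)) L)) where
  Adj a b := a.1 ≠ b.1 ∧ ∀ x, b.2 x = tog s(a.1, b.1) (a.2 x)
  symm := ⟨by
    rintro a b ⟨h, h2⟩
    refine ⟨h.symm, fun x => ?_⟩
    rw [h2, Sym2.eq_swap, tog_invol]⟩
  loopless := ⟨fun a h => h.1 rfl⟩

theorem lift_walk (k L : ℕ) {b c : Fin k × Equiv.Perm (RWord (Sym2 (Fin k)) L)}
    (w : (liftG k L).Walk b c) : ∀ a, (liftG k L).Adj a b → w.IsTrail → s(a, b) ∉ w.edges →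
    ∀ x, (b.2 x).1.head? = some s(a.1, b.1) → (b.2 x).1.length + w.length ≤ L →
    (c.2 x).1.length = (b.2 x).1.length + w.length := by
  induction w with
  | nil => intros; simp
  | @cons b d c h p ih =>
    intro a hab ht hn x hx hl
    rw [SimpleGraph.Walk.isTrail_cons] at ht
    simp only [SimpleGraph.Walk.edges_cons, List.mem_cons, not_or] at hn
    simp only [SimpleGraph.Walk.length_cons] at hl ⊢
    have h1 : (d.2 x).1 = s(b.1, d.1) :: (b.2 x).1 := by
      rw [h.2]
      apply tog_cons
      · rw [hx]
        intro he
        have he := Option.some.inj he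
        apply hn.1
        have hda : d.1 = a.1 := by
          rw [Sym2.eq_swap, Sym2.congr_right] at he
          exact he.symm
        have : d = a := by
          apply Prod.ext hda
          apply Equiv.ext
          intro y
          rw [h.2, hab.2, ← he, tog_invol]
        rw [this, Sym2.eq_swap]
      · omega
    have := ih b h ht.1 ht.2 x (by rw [h1]; rfl) (by rw [h1]; simp; omega)
    rw [this, h1]; simp; omega

theorem lift_cycle (k L : ℕ) (v : Fin k × Equiv.Perm (RWord (Sym2 (Fin k)) L))
    (w : (liftG k L).Walk v v) (hw : w.IsCycle) : L ≤ w.length := by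
  by_contra hlt
  push Not at hlt
  cases w with
  | nil => exact hw.ne_nil rfl
  | @cons _ b _ h p =>
    have ht := hw.isTrail
    rw [SimpleGraph.Walk.isTrail_cons] at ht
    rw [SimpleGraph.Walk.length_cons] at hlt
    let e : RWord (Sym2 (Fin k)) L := ⟨[], by simp, by simp⟩
    have h0 : v.2 (v.2.symm e) = e := by simp
    have h1 : (b.2 (v.2.symm e)).1 = [s(v.1, b.1)] := by
      rw [h.2, h0]
      apply tog_cons
      · simp [e]
      · simp [e]; omega
    have := lift_walk k L p v h ht.1 ht.2 (v.2.symm e) (by rw [h1]; rfl)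
      (by rw [h1]; simp; omega)
    rw [h1, h0] at this
    simp [e] at this
    omega

/-- For all positive integers `k` and `ℓ`, there exists a (nonempty)
`(k-1)`-regular `k`-freezable graph with girth at least `ℓ`. -/
theorem exists_regular_freezable_high_girth (k ℓ : ℕ) (hk : 1 ≤ k) (hℓ : 1 ≤ ℓ) :
    ∃ (n : ℕ) (G : SimpleGraph (Fin n)),
      0 < n ∧
      (∀ v, (G.neighborSet v).ncard = k - 1) ∧
      (∀ (v : Fin n) (w : G.Walk v v), w.IsCycle → ℓ ≤ w.length) ∧
      ∃ α : Fin n → Fin k, FrozenColoring G k α := by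
  obtain ⟨n, ⟨φ⟩⟩ := Finite.exists_equiv_fin (Fin k × Equiv.Perm (RWord (Sym2 (Fin k)) ℓ))
  let G := (liftG k ℓ).comap φ.symm
  let α : Fin n → Fin k := fun v => (φ.symm v).1
  have hp : ∀ u v, G.Adj u v → α u ≠ α v := fun u v h => h.1
  have hex : ∀ v c, c ≠ α v → ∃ u, G.Adj v u ∧ α u = c := by
    intro v c hc
    refine ⟨φ (c, (φ.symm v).2.trans (tog_invol s(α v, c)).toPerm), ?_, by simp [α]⟩
    refine ⟨by simpa [α] using hc.symm, fun x => ?_⟩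
    simp [α]
  have huniq : ∀ v u u', G.Adj v u → G.Adj v u' → α u = α u' → u = u' := by
    intro v u u' h h' he
    apply φ.symm.injective
    apply Prod.ext he
    apply Equiv.ext
    intro x
    rw [h.2, h'.2]
    simp only [α] at he
    rw [he]
  refine ⟨n, G, ?_, ?_, ?_, α, hp, ?_⟩
  · exact Fin.pos (φ (⟨0, hk⟩, 1))
  · intro v
    have h1 : α '' (G.neighborSet v) = {α v}ᶜ := by
      ext c
      constructor
      · rintro ⟨u, hu, rfl⟩
        exact (hp _ _ hu).symm
      · intro hc
        exact hex v c hc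
    have hi : Set.InjOn α (G.neighborSet v) := fun a ha b hb h => huniq v a b ha hb h
    rw [← hi.ncard_image, h1, Set.ncard_compl]
    simp
  · intro v w hw
    let f : G →g liftG k ℓ := ⟨φ.symm, fun h => h⟩
    have := lift_cycle k ℓ _ (w.map f) (hw.map (f := f) φ.symm.injective)
    simpa using this
  · intro v c hc hprop
    obtain ⟨u, hu, huc⟩ := hex v c hc
    apply hprop v u hu
    rw [Function.update_self, Function.update_of_ne hu.ne.symm, huc]
end

section
/- Let G be a (k−1)-regular undirected graph and α a frozen k-colouring of G. Then for every two colours i, j ∈ {1,…,k} there is a perfect matching in G between the vertices coloured i and the vertices coloured j; in particular all k colour classes of α have the same size. -/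
/-- In a `(k-1)`-regular graph with a frozen `k`-colouring `α`, between any two
distinct colour classes there is a perfect matching (a bijection matching each
vertex to an adjacent one); in particular all colour classes have equal size. -/
theorem frozen_coloring_perfect_matching {V : Type} [Fintype V] [DecidableEq V]
    (G : SimpleGraph V) (k : ℕ) (hk : 1 ≤ k)
    (hreg : ∀ v, (G.neighborSet v).ncard = k - 1)
    (α : V → Fin k) (hfrozen : FrozenColoring G k α) :
    (∀ i j : Fin k, i ≠ j →
      ∃ e : {v : V // α v = i} ≃ {v : V // α v = j},
        ∀ v : {v : V // α v = i}, G.Adj v.1 (e v).1) ∧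
    (∀ i j : Fin k, {v : V | α v = i}.ncard = {v : V | α v = j}.ncard) := by
  obtain ⟨hp, hf⟩ := hfrozen
  have hex : ∀ (v : V) (c : Fin k), c ≠ α v → ∃ u, G.Adj v u ∧ α u = c := by
    intro v c hc
    by_contra hne
    push Not at hne
    apply hf v c hc
    intro a b hab
    by_cases ha : a = v
    · subst ha
      have hb : b ≠ a := hab.ne'
      rw [Function.update_self, Function.update_of_ne hb]
      exact (hne b hab).symm
    · by_cases hb : b = v
      · subst hb
        rw [Function.update_self, Function.update_of_ne ha]
        exact hne a hab.symm
      · rw [Function.update_of_ne ha, Function.update_of_ne hb]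
        exact hp a b hab
  have himg : ∀ v, α '' (G.neighborSet v) = {α v}ᶜ := by
    intro v
    ext c
    constructor
    · rintro ⟨u, hu, rfl⟩
      exact (hp v u hu).symm
    · intro hc
      obtain ⟨u, hu, h⟩ := hex v c hc
      exact ⟨u, hu, h⟩
  have hinj : ∀ v, Set.InjOn α (G.neighborSet v) := by
    intro v
    apply Set.injOn_of_ncard_image_eq _ (Set.toFinite _)
    rw [himg, hreg, Set.ncard_compl, Set.ncard_singleton, Nat.card_eq_fintype_card,
      Fintype.card_fin]
  have hmatch : ∀ i j : Fin k, i ≠ j →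
      ∃ e : {v : V // α v = i} ≃ {v : V // α v = j},
        ∀ v : {v : V // α v = i}, G.Adj v.1 (e v).1 := by
    intro i j hij
    have h1 : ∀ v : {v : V // α v = i}, ∃ u : {v : V // α v = j}, G.Adj v.1 u.1 := by
      rintro ⟨v, rfl⟩
      obtain ⟨u, hu, h⟩ := hex v j hij.symm
      exact ⟨⟨u, h⟩, hu⟩
    have h2 : ∀ v : {v : V // α v = j}, ∃ u : {v : V // α v = i}, G.Adj v.1 u.1 := by
      rintro ⟨v, rfl⟩
      obtain ⟨u, hu, h⟩ := hex v i hij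
      exact ⟨⟨u, h⟩, hu⟩
    choose f hf1 using h1
    choose g hg1 using h2
    refine ⟨⟨f, g, ?_, ?_⟩, hf1⟩
    · intro v
      apply Subtype.ext
      exact hinj (f v).1 (hg1 (f v)) (hf1 v).symm ((g (f v)).2.trans v.2.symm)
    · intro v
      apply Subtype.ext
      exact hinj (g v).1 (hf1 (g v)) (hg1 v).symm ((f (g v)).2.trans v.2.symm)
  refine ⟨hmatch, fun i j => ?_⟩
  by_cases hij : i = j
  · rw [hij]
  · obtain ⟨e, -⟩ := hmatch i j hij
    exact Nat.card_congr e
end
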